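/- Dirichlet energy of the coupled difference in an annulus: For every Λ̄ > 0, u ∈ ℝ² and ε > 0 there exists a constant c = c(Λ̄, ε, V) > 0 such that the following holds for every finite connected D ⊆ ℤ² of diameter R ≥ 2 and all boundary conditions ψ, ψ̃ : ∂D → ℝ with max_{x∈∂D}|ψ(x) − u·x| ≤ Λ̄ (log R)^Λ̄ and max_{x∈∂D}|ψ̃(x) − u·x| ≤ Λ̄ (log R)^Λ̄. There exist R₁ with R^{1−ε} ≤ R₁ ≤ 2R^{1−ε} and a coupling (h^ψ, h^ψ̃) of P_D^ψ and P_D^ψ̃ such that, with h̄ = h^ψ − h^ψ̃ and R₂ = R₁ + R^{1−5ε}, Σ over edges b with both endpoints x satisfying R₁ ≤ dist(x, ∂D) < R₂ of E|∇h̄(b)|² is at most c·R^{−ε}, and Σ over edges b with both endpoints in D(R₁) of E|∇h̄(b)|² is at most c·R^{3ε}. -/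

import Mathlib

/-!
Under the Langevin dynamics driven by a common noise, the difference `h̄` of the two fields solves
a linear parabolic equation with coefficients in `[a, A]`. In a stationary coupling the drift of
`∑ η(x)² h̄(x)²` vanishes, which bounds `∑ η² E|∇h̄|²` by `∑ |∇η|² E h̄²`, and by the maximum
principle `|h̄|` is at most the maximum `M` of `|ψ - ψ̃|`.

Stochastic calculus is avoided by taking, instead of a stationary coupling, one which almost
minimizes a transport cost `E ∑ θ_x(h̄(x))`. Moving both fields at a single site by a small Barker
step, with the same proposal and the same uniform variable, gives another coupling, so the cost
cannot drop by much. To second order in the step size this says that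
`∑_x E θ_x'(h̄(x)) (∂_x H^ψ(h^ψ) - ∂_x H^ψ̃(h^ψ̃))` is almost nonpositive, and summation by parts
turns the sum into one over the edges. The maximum principle is replaced by the choice
`θ_x(s) = (η(x)² s² + Λ T(s)²) / 2`, where `T(s)` is the part of `s` outside `[-M, M]`: since
`T(h̄)` vanishes on `∂D`, a Poincaré inequality lets its energy absorb, for `Λ` large depending on
`D`, the errors coming from the values of `h̄` outside `[-M, M]`. In the remaining inequality
`∑ η² E|∇h̄|² ≤ 8 (A/a)² ‖∇η‖∞² M² (|D*| + 1)` the factor `Λ` no longer appears.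

Take `η = min(1, dist(·, ∂D) / R^{1-ε})`. As `M` is a power of `log R` and `|D*| ≤ 36 R²`, the
energy in `D(R^{1-ε})` is at most `c R^{3ε}`. More than `R^{4ε}` disjoint annuli of width
`R^{1-5ε}` have their inner radius in `[R^{1-ε}, 2 R^{1-ε}]`, and one of them carries at most the
average energy `c R^{3ε} / R^{4ε}`.
-/

open MeasureTheory ProbabilityTheory Real
open scoped ENNReal NNReal Classical

noncomputable section

abbrev Z2 := ℤ × ℤ

/-- Nearest-neighbor adjacency in `ℤ²` (Euclidean distance one). -/
def adjZ (x y : Z2) : Prop := (x.1 - y.1) ^ 2 + (x.2 - y.2) ^ 2 = 1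

/-- Exterior vertex boundary `∂D` of a set `D ⊆ ℤ²`. -/
def bdry (D : Set Z2) : Set Z2 := {x | x ∉ D ∧ ∃ y ∈ D, adjZ x y}

/-- Euclidean distance on `ℤ²`. -/
def edist2 (x y : Z2) : ℝ :=
  Real.sqrt (((x.1 : ℝ) - (y.1 : ℝ)) ^ 2 + ((x.2 : ℝ) - (y.2 : ℝ)) ^ 2)

/-- Euclidean distance from a point to a set. -/
def distToSet (x : Z2) (S : Set Z2) : ℝ := sInf (edist2 x '' S)

/-- Euclidean diameter of a set in `ℤ²`. -/
def diamZ (D : Set Z2) : ℝ := sSup {d : ℝ | ∃ x ∈ D, ∃ y ∈ D, d = edist2 x y}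

/-- Discrete Euclidean ball. -/
def ballZ (y : Z2) (r : ℝ) : Set Z2 := {z | edist2 z y ≤ r}

/-- Positively oriented nearest-neighbor edges with at least one endpoint in `D`. -/
def edgesOf (D : Set Z2) : Set (Z2 × Z2) :=
  {b | (b.2 = b.1 + ((1, 0) : Z2) ∨ b.2 = b.1 + ((0, 1) : Z2)) ∧ (b.1 ∈ D ∨ b.2 ∈ D)}

/-- Positively oriented nearest-neighbor edges with both endpoints in `D`. -/
def intEdges (D : Set Z2) : Set (Z2 × Z2) :=
  {b | (b.2 = b.1 + ((1, 0) : Z2) ∨ b.2 = b.1 + ((0, 1) : Z2)) ∧ b.1 ∈ D ∧ b.2 ∈ D}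

/-- Edges with one endpoint in `D` and the other in `∂D`. -/
def bdEdges (D : Set Z2) : Set (Z2 × Z2) :=
  {b | (b.2 = b.1 + ((1, 0) : Z2) ∨ b.2 = b.1 + ((0, 1) : Z2)) ∧
    ((b.1 ∈ D ∧ b.2 ∈ bdry D) ∨ (b.1 ∈ bdry D ∧ b.2 ∈ D))}

/-- The endpoint of an edge lying outside `D` (for boundary edges). -/
def bEnd (D : Set Z2) (b : Z2 × Z2) : Z2 := if b.1 ∈ D then b.2 else b.1

/-- Discrete gradient of `f` across the oriented edge `b`. -/
def grad (f : Z2 → ℝ) (b : Z2 × Z2) : ℝ := f b.2 - f b.1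

/-- `D ⊆ ℤ²` is connected (as an induced subgraph of the nearest-neighbor lattice). -/
def DiscConnected (D : Set Z2) : Prop :=
  D.Nonempty ∧ ∀ x ∈ D, ∀ y ∈ D, ∃ (n : ℕ) (p : ℕ → Z2),
    p 0 = x ∧ p n = y ∧ (∀ i ≤ n, p i ∈ D) ∧ ∀ i < n, adjZ (p i) (p (i + 1))

/-- `h ∨ φ`: the field `h` on `D` extended by the boundary condition `φ` off `D`. -/
def vee (D : Finset Z2) (h : ↥D → ℝ) (φ : Z2 → ℝ) : Z2 → ℝ :=
  fun x => if hx : x ∈ D then h ⟨x, hx⟩ else φ x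

/-- Ginzburg–Landau Hamiltonian `∑_{b ∈ D*} V(∇(h∨φ)(b))`. -/
def glEnergy (V : ℝ → ℝ) (D : Finset Z2) (φ : Z2 → ℝ) (h : ↥D → ℝ) : ℝ :=
  ∑ᶠ b ∈ edgesOf (D : Set Z2), V (grad (vee D h φ) b)

/-- Unnormalized GL measure: density `exp(−H)` w.r.t. Lebesgue measure on `ℝ^D`. -/
def glFree (V : ℝ → ℝ) (D : Finset Z2) (φ : Z2 → ℝ) : Measure (↥D → ℝ) :=
  volume.withDensity fun h => ENNReal.ofReal (Real.exp (-(glEnergy V D φ h)))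

/-- `P` is the GL measure on `D` with potential `V` and boundary condition `φ`:
a probability measure proportional to `exp(−H) dh`. -/
def IsGL (V : ℝ → ℝ) (D : Finset Z2) (φ : Z2 → ℝ) (P : Measure (↥D → ℝ)) : Prop :=
  IsProbabilityMeasure P ∧ ∃ c : ℝ≥0∞, c ≠ 0 ∧ c ≠ ⊤ ∧ P = c • glFree V D φ

/-- `μ` is a coupling of `P` and `Q`. -/
def IsCoupling {α : Type*} [MeasurableSpace α] (μ : Measure (α × α)) (P Q : Measure α) : Prop :=
  IsProbabilityMeasure μ ∧ μ.map Prod.fst = P ∧ μ.map Prod.snd = Q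

/-- `f` is discrete-harmonic at `x`: the sum of the increments to the four neighbors vanishes. -/
def DiscHarmAt (f : Z2 → ℝ) (x : Z2) : Prop :=
  f (x + ((1, 0) : Z2)) + f (x - ((1, 0) : Z2)) + f (x + ((0, 1) : Z2)) + f (x - ((0, 1) : Z2))
    - 4 * f x = 0

/-- `D(r) = {x ∈ D : dist(x, ∂D) ≥ r}`. -/
def innerSet (D : Finset Z2) (r : ℝ) : Set Z2 :=
  {x | x ∈ D ∧ r ≤ distToSet x (bdry (D : Set Z2))}


/-- The annulus `{x ∈ D : R₁ ≤ dist(x, ∂D) < R₂}`. -/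
def annul (D : Finset Z2) (R1 R2 : ℝ) : Set Z2 :=
  {x | x ∈ D ∧ R1 ≤ distToSet x (bdry (D : Set Z2)) ∧ distToSet x (bdry (D : Set Z2)) < R2}

/-! ### Barker moves -/

section Barker

variable {E : Type*}

/-- The unnormalized Gibbs measure `exp (-H) dν`. -/
def gibbs [MeasurableSpace E] (ν : Measure E) (H : E → ℝ) : Measure E :=
  ν.withDensity fun h => ENNReal.ofReal (rexp (-H h))

variable {H : E → ℝ}

lemma lintegral_gibbs [MeasurableSpace E] {ν : Measure E} (hH : Measurable H)
    {f : E → ℝ≥0∞} (hf : Measurable f) :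
    ∫⁻ h, f h ∂gibbs ν H = ∫⁻ h, ENNReal.ofReal (rexp (-H h)) * f h ∂ν := by
  rw [gibbs, lintegral_withDensity_eq_lintegral_mul _ (by fun_prop) hf]
  rfl

variable [AddGroup E]

/-- The acceptance probability of the move `h ↦ h + v` in Barker's algorithm for the density
`exp (-H)`, i.e. `exp (-H (h + v)) / (exp (-H h) + exp (-H (h + v)))`. -/
def acceptProb (H : E → ℝ) (v h : E) : unitInterval :=
  unitInterval.sigmoid (H h - H (h + v))

/-- Barker's move `h ↦ h + v`, the second argument being the uniform variable which decides whether
it is accepted. -/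
def barkerMove (H : E → ℝ) (v : E) (x : E × unitInterval) : E :=
  if x.2 < acceptProb H v x.1 then x.1 + v else x.1

lemma ofReal_exp_mul_acceptProb (H : E → ℝ) (v h : E) :
    ENNReal.ofReal (rexp (-H h)) * ENNReal.ofReal (acceptProb H v h)
      = ENNReal.ofReal (rexp (-H (h + v))) * ENNReal.ofReal (acceptProb H (-v) (h + v)) := by
  have balance : ∀ x y : ℝ, rexp (-x) * sigmoid (x - y) = rexp (-y) * sigmoid (y - x) := by
    intro x y
    simp only [Real.sigmoid_def, neg_sub, Real.exp_sub, Real.exp_neg]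
    field_simp
    ring
  rw [← ENNReal.ofReal_mul (exp_pos _).le, ← ENNReal.ofReal_mul (exp_pos _).le]
  simp only [acceptProb, add_neg_cancel_right]
  exact congrArg _ (balance _ _)

lemma lintegral_barkerMove_right (H : E → ℝ) (v h : E) (f : E → ℝ≥0∞) :
    ∫⁻ t, f (barkerMove H v (h, t))
      = ENNReal.ofReal (acceptProb H v h) * f (h + v)
        + ENNReal.ofReal (1 - acceptProb H v h) * f h := by
  have hIio : MeasurableSet (Set.Iio (acceptProb H v h)) := measurableSet_Iio
  have hcompl : (Set.Iio (acceptProb H v h))ᶜ = Set.Ici (acceptProb H v h) := Set.compl_Iio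
  rw [← lintegral_add_compl _ hIio, hcompl,
    setLIntegral_congr_fun hIio (g := fun _ => f (h + v)) fun t ht => by
      simp only [barkerMove, if_pos (Set.mem_Iio.mp ht)],
    setLIntegral_congr_fun measurableSet_Ici (g := fun _ => f h) fun t ht => by
      simp only [barkerMove, if_neg (not_lt.mpr (Set.mem_Ici.mp ht))],
    setLIntegral_const, setLIntegral_const, unitInterval.volume_Iio, unitInterval.volume_Ici,
    mul_comm, mul_comm (f h)]

variable [MeasurableSpace E] [MeasurableAdd E]

lemma measurable_acceptProb (hH : Measurable H) (v : E) : Measurable (acceptProb H v) :=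
  unitInterval.continuous_sigmoid.measurable.comp
    (hH.sub (hH.comp (measurable_add_const v)))

lemma measurable_barkerMove (hH : Measurable H) (v : E) : Measurable (barkerMove H v) :=
  Measurable.ite
    (measurableSet_lt measurable_snd ((measurable_acceptProb hH v).comp measurable_fst))
    (measurable_fst.add_const v) measurable_fst

lemma measurable_ofReal_acceptProb_mul (hH : Measurable H) (v : E) {f : E → ℝ≥0∞}
    (hf : Measurable f) : Measurable fun h => ENNReal.ofReal (acceptProb H v h) * f h :=
  (measurable_acceptProb hH v).subtype_val.ennreal_ofReal.mul hf

lemma lintegral_barkerMove (hH : Measurable H) (P : Measure E) (v : E) {f : E → ℝ≥0∞}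
    (hf : Measurable f) :
    ∫⁻ x, f (barkerMove H v x) ∂P.prod volume
      = ∫⁻ h, ENNReal.ofReal (acceptProb H v h) * f (h + v) ∂P
        + ∫⁻ h, ENNReal.ofReal (1 - acceptProb H v h) * f h ∂P := by
  have hf' : Measurable fun h => f (h + v) := hf.comp (measurable_add_const v)
  have hfm : Measurable fun x => f (barkerMove H v x) := hf.comp (measurable_barkerMove hH v)
  rw [lintegral_prod _ hfm.aemeasurable,
    ← lintegral_add_left (measurable_ofReal_acceptProb_mul hH v hf')]
  exact lintegral_congr fun h => lintegral_barkerMove_right H v h f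

lemma lintegral_acceptProb_add_lintegral_one_sub (hH : Measurable H) (P : Measure E) (v : E)
    {f : E → ℝ≥0∞} (hf : Measurable f) :
    ∫⁻ h, ENNReal.ofReal (acceptProb H v h) * f h ∂P
      + ∫⁻ h, ENNReal.ofReal (1 - acceptProb H v h) * f h ∂P = ∫⁻ h, f h ∂P := by
  rw [← lintegral_add_left (measurable_ofReal_acceptProb_mul hH v hf)]
  refine lintegral_congr fun h => ?_
  rw [← add_mul, ← ENNReal.ofReal_add (acceptProb H v h).2.1
    (sub_nonneg.mpr (acceptProb H v h).2.2), add_sub_cancel, ENNReal.ofReal_one, one_mul]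

variable {ν : Measure E} [ν.IsAddRightInvariant]

lemma lintegral_acceptProb_mul_comp_add (hH : Measurable H) (v : E) {f : E → ℝ≥0∞}
    (hf : Measurable f) :
    ∫⁻ h, ENNReal.ofReal (acceptProb H v h) * f (h + v) ∂gibbs ν H
      = ∫⁻ h, ENNReal.ofReal (acceptProb H (-v) h) * f h ∂gibbs ν H := by
  have hf' : Measurable fun h => f (h + v) := hf.comp (measurable_add_const v)
  rw [lintegral_gibbs hH (measurable_ofReal_acceptProb_mul hH v hf'),
    lintegral_gibbs hH (measurable_ofReal_acceptProb_mul hH (-v) hf),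
    ← lintegral_add_right_eq_self
      (fun h => ENNReal.ofReal (rexp (-H h)) * (ENNReal.ofReal (acceptProb H (-v) h) * f h)) v]
  refine lintegral_congr fun h => ?_
  simp only [← mul_assoc, ofReal_exp_mul_acceptProb H v h]

lemma map_barkerMove_add_map_barkerMove_neg (hH : Measurable H) (v : E) :
    ((gibbs ν H).prod volume).map (barkerMove H v)
      + ((gibbs ν H).prod volume).map (barkerMove H (-v)) = (2 : ℝ≥0∞) • gibbs ν H := by
  refine Measure.ext_of_lintegral _ fun f hf => ?_
  have hmove : ∀ w, ∫⁻ h, f h ∂((gibbs ν H).prod volume).map (barkerMove H w)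
      = ∫⁻ h, ENNReal.ofReal (acceptProb H (-w) h) * f h ∂gibbs ν H
        + ∫⁻ h, ENNReal.ofReal (1 - acceptProb H w h) * f h ∂gibbs ν H := fun w => by
    rw [lintegral_map hf (measurable_barkerMove hH w), lintegral_barkerMove hH _ w hf,
      lintegral_acceptProb_mul_comp_add hH w hf]
  rw [lintegral_add_measure, hmove, hmove, neg_neg, lintegral_smul_measure, smul_eq_mul, two_mul]
  nth_rw 1 [← lintegral_acceptProb_add_lintegral_one_sub hH _ v hf]
  rw [← lintegral_acceptProb_add_lintegral_one_sub hH (gibbs ν H) (-v) hf]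
  ring

/-- The law of a pair of fields with law `μ` after both have made a Barker move by `v`, decided by
the same uniform variable. -/
def coupledMove (μ : Measure (E × E)) (H Ht : E → ℝ) (v : E) : Measure (E × E) :=
  (μ.prod volume).map fun x => (barkerMove H v (x.1.1, x.2), barkerMove Ht v (x.1.2, x.2))

variable {Ht : E → ℝ}

lemma measurable_barkerMove_pair (hH : Measurable H) (hHt : Measurable Ht) (v : E) :
    Measurable fun x : (E × E) × unitInterval =>
      (barkerMove H v (x.1.1, x.2), barkerMove Ht v (x.1.2, x.2)) :=
  ((measurable_barkerMove hH v).comp (by fun_prop)).prodMk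
    ((measurable_barkerMove hHt v).comp (by fun_prop))

lemma map_fst_coupledMove (hH : Measurable H) (hHt : Measurable Ht) (μ : Measure (E × E))
    [SFinite μ] (v : E) :
    (coupledMove μ H Ht v).map Prod.fst
      = ((μ.map Prod.fst).prod volume).map (barkerMove H v) := by
  nth_rw 1 [← Measure.map_id (μ := (volume : Measure unitInterval))]
  rw [coupledMove, Measure.map_map measurable_fst (measurable_barkerMove_pair hH hHt v),
    Measure.map_prod_map _ _ measurable_fst measurable_id,
    Measure.map_map (measurable_barkerMove hH v) (measurable_fst.prodMap measurable_id)]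
  rfl

lemma map_snd_coupledMove (hH : Measurable H) (hHt : Measurable Ht) (μ : Measure (E × E))
    [SFinite μ] (v : E) :
    (coupledMove μ H Ht v).map Prod.snd
      = ((μ.map Prod.snd).prod volume).map (barkerMove Ht v) := by
  nth_rw 1 [← Measure.map_id (μ := (volume : Measure unitInterval))]
  rw [coupledMove, Measure.map_map measurable_snd (measurable_barkerMove_pair hH hHt v),
    Measure.map_prod_map _ _ measurable_snd measurable_id,
    Measure.map_map (measurable_barkerMove hHt v) (measurable_snd.prodMap measurable_id)]
  rfl

lemma IsCoupling.half_smul_coupledMove_add_neg {νt : Measure E} [νt.IsAddRightInvariant]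
    (hH : Measurable H) (hHt : Measurable Ht) {μ : Measure (E × E)}
    (hμ : IsCoupling μ (gibbs ν H) (gibbs νt Ht)) (v : E) :
    IsCoupling ((2⁻¹ : ℝ≥0∞) • (coupledMove μ H Ht v + coupledMove μ H Ht (-v)))
      (gibbs ν H) (gibbs νt Ht) := by
  obtain ⟨hprob, hfst, hsnd⟩ := hμ
  have hmove := fun w => Measure.isProbabilityMeasure_map (μ := μ.prod volume)
    (measurable_barkerMove_pair hH hHt w).aemeasurable
  refine ⟨⟨?_⟩, ?_, ?_⟩
  · rw [Measure.smul_apply, Measure.add_apply, coupledMove, coupledMove, (hmove v).measure_univ,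
      (hmove (-v)).measure_univ, smul_eq_mul, one_add_one_eq_two]
    exact ENNReal.inv_mul_cancel two_ne_zero ENNReal.ofNat_ne_top
  · rw [Measure.map_smul, Measure.map_add _ _ measurable_fst, map_fst_coupledMove hH hHt,
      map_fst_coupledMove hH hHt, hfst, map_barkerMove_add_map_barkerMove_neg hH, smul_smul,
      ENNReal.inv_mul_cancel two_ne_zero ENNReal.ofNat_ne_top, one_smul]
  · rw [Measure.map_smul, Measure.map_add _ _ measurable_snd, map_snd_coupledMove hH hHt,
      map_snd_coupledMove hH hHt, hsnd, map_barkerMove_add_map_barkerMove_neg hHt, smul_smul,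
      ENNReal.inv_mul_cancel two_ne_zero ENNReal.ofNat_ne_top, one_smul]

end Barker

section SigmoidExpansion

lemma abs_sigmoid_sub_half_le (x : ℝ) : |sigmoid x - 1 / 2| ≤ |x| := by
  have hbound : ∀ y ∈ (Set.univ : Set ℝ), ‖sigmoid y * (1 - sigmoid y)‖ ≤ 1 := fun y _ => by
    have h0 := sigmoid_nonneg y
    have h1 := sigmoid_le_one y
    rw [Real.norm_of_nonneg (mul_nonneg h0 (by linarith))]
    nlinarith
  have := convex_univ.norm_image_sub_le_of_norm_hasDerivWithin_le
    (fun y _ => (hasDerivAt_sigmoid y).hasDerivWithinAt) hbound (Set.mem_univ 0) (Set.mem_univ x)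
  simpa [sigmoid_zero] using this

lemma abs_sigmoid_sub_linear_le (x : ℝ) : |sigmoid x - (1 / 2 + x / 4)| ≤ x ^ 2 := by
  have hderiv : ∀ y, HasDerivAt (fun y => sigmoid y - y / 4) (-(sigmoid y - 1 / 2) ^ 2) y :=
    fun y => ((hasDerivAt_sigmoid y).sub ((hasDerivAt_id y).div_const 4)).congr_deriv (by ring)
  have hbound : ∀ y ∈ Set.Icc (-|x|) |x|, ‖-(sigmoid y - 1 / 2) ^ 2‖ ≤ |x| := fun y hy => by
    have hhalf : |sigmoid y - 1 / 2| ≤ 1 := abs_le.mpr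
      ⟨by linarith [sigmoid_nonneg y], by linarith [sigmoid_le_one y]⟩
    have hlin := (abs_sigmoid_sub_half_le y).trans (abs_le.mpr hy)
    rw [norm_neg, norm_pow, Real.norm_eq_abs]
    nlinarith [abs_nonneg (sigmoid y - 1 / 2)]
  have := (convex_Icc (-|x|) |x|).norm_image_sub_le_of_norm_hasDerivWithin_le
    (fun y _ => (hderiv y).hasDerivWithinAt) hbound (x := 0) (y := x)
    ⟨neg_nonpos.mpr (abs_nonneg x), abs_nonneg x⟩ ⟨neg_abs_le x, le_abs_self x⟩
  rw [sigmoid_zero, Real.norm_eq_abs, Real.norm_eq_abs, sub_zero, abs_mul_abs_self] at this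
  convert this using 2 <;> ring

lemma integral_indicator_Iio_sub (a b : unitInterval) :
    ∫ t, ((Set.Iio a).indicator 1 t - (Set.Iio b).indicator 1 t : ℝ) = a - b := by
  have hvol : ∀ c : unitInterval, ∫ t, ((Set.Iio c).indicator 1 t : ℝ) = c := fun c => by
    rw [integral_indicator_one measurableSet_Iio, measureReal_def, unitInterval.volume_Iio,
      ENNReal.toReal_ofReal c.2.1]
  have hintegrable : ∀ c : unitInterval, Integrable fun t => ((Set.Iio c).indicator 1 t : ℝ) :=
    fun c => (integrable_const 1).indicator measurableSet_Iio
  rw [integral_sub (hintegrable a) (hintegrable b), hvol, hvol]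

lemma integral_abs_indicator_Iio_sub (a b : unitInterval) :
    ∫ t, |((Set.Iio a).indicator 1 t - (Set.Iio b).indicator 1 t : ℝ)| = |(a : ℝ) - b| := by
  wlog hba : b ≤ a generalizing a b
  · simpa only [abs_sub_comm] using this b a (le_of_not_ge hba)
  have hmono : ∀ t : unitInterval,
      (0 : ℝ) ≤ (Set.Iio a).indicator 1 t - (Set.Iio b).indicator 1 t := fun t =>
    sub_nonneg.mpr (Set.indicator_le_indicator_of_subset (Set.Iio_subset_Iio hba)
      (fun _ => zero_le_one) t)
  simp only [abs_of_nonneg (hmono _), integral_indicator_Iio_sub,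
    abs_of_nonneg (sub_nonneg.mpr (Subtype.coe_le_coe.mpr hba))]

end SigmoidExpansion

section AcceptDiff

variable {E : Type*} [AddGroup E]

/-- The difference of the acceptance indicators of the two coupled moves by `v`. -/
def acceptDiff (H Ht : E → ℝ) (v : E) (x : (E × E) × unitInterval) : ℝ :=
  (Set.Iio (acceptProb H v x.1.1)).indicator 1 x.2
    - (Set.Iio (acceptProb Ht v x.1.2)).indicator 1 x.2

variable (H Ht : E → ℝ) (v : E)

lemma integral_acceptDiff (ω : E × E) :
    ∫ t, acceptDiff H Ht v (ω, t) = acceptProb H v ω.1 - acceptProb Ht v ω.2 :=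
  integral_indicator_Iio_sub (acceptProb H v ω.1) (acceptProb Ht v ω.2)

lemma integral_abs_acceptDiff (ω : E × E) :
    ∫ t, |acceptDiff H Ht v (ω, t)| = |(acceptProb H v ω.1 : ℝ) - acceptProb Ht v ω.2| :=
  integral_abs_indicator_Iio_sub (acceptProb H v ω.1) (acceptProb Ht v ω.2)

lemma sq_acceptDiff (x : (E × E) × unitInterval) :
    acceptDiff H Ht v x ^ 2 = |acceptDiff H Ht v x| := by
  simp only [acceptDiff, Set.indicator_apply, Pi.one_apply]
  split_ifs <;> norm_num

lemma abs_acceptDiff_le_one (x : (E × E) × unitInterval) : |acceptDiff H Ht v x| ≤ 1 := by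
  simp only [acceptDiff, Set.indicator_apply, Pi.one_apply]
  split_ifs <;> norm_num

lemma measurable_acceptDiff [MeasurableSpace E] [MeasurableAdd E] {H Ht : E → ℝ}
    (hH : Measurable H) (hHt : Measurable Ht) (v : E) : Measurable (acceptDiff H Ht v) := by
  have hind : ∀ {F : E → ℝ}, Measurable F → ∀ {p : E × E → E}, Measurable p →
      Measurable fun x : (E × E) × unitInterval =>
        ((Set.Iio (acceptProb F v (p x.1))).indicator 1 x.2 : ℝ) := fun hF _ hp =>
    Measurable.ite (measurableSet_lt measurable_snd
      ((measurable_acceptProb hF v).comp (hp.comp measurable_fst))) measurable_const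
      measurable_const
  exact (hind hH measurable_fst).sub (hind hHt measurable_snd)

end AcceptDiff

section SingleSite

variable {ι : Type*} [Fintype ι]

/-- `G` is the gradient of the energy `H`, which it approximates up to `B ξ²` in each coordinate
direction, and it grows at most linearly. -/
structure HasQuadraticExpansion (H : (ι → ℝ) → ℝ) (G : ι → (ι → ℝ) → ℝ) (B : ℝ) : Prop where
  measurable : Measurable H
  measurable_gradient : ∀ i, Measurable (G i)
  abs_sub_le : ∀ i h ξ, |H (h + Pi.single i ξ) - H h - ξ * G i h| ≤ B * ξ ^ 2
  abs_gradient_le : ∀ i h, |G i h| ≤ B * (1 + ‖h‖)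

lemma HasQuadraticExpansion.nonneg {H : (ι → ℝ) → ℝ} {G : ι → (ι → ℝ) → ℝ} {B : ℝ}
    (hH : HasQuadraticExpansion H G B) (i : ι) : 0 ≤ B := by
  simpa using (abs_nonneg _).trans (hH.abs_gradient_le i 0)

lemma HasQuadraticExpansion.abs_acceptProb_sub_le {H : (ι → ℝ) → ℝ} {G : ι → (ι → ℝ) → ℝ}
    {B : ℝ} (hH : HasQuadraticExpansion H G B) (i : ι) (h : ι → ℝ) {ξ : ℝ} (hξ : |ξ| ≤ 1) :
    |(acceptProb H (Pi.single i ξ) h : ℝ) - (1 / 2 - ξ * G i h / 4)|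
      ≤ (B + 4 * B ^ 2) * ξ ^ 2 * (1 + ‖h‖) ^ 2 := by
  have hB := hH.nonneg i
  have hd := hH.abs_sub_le i h ξ
  set d := H (h + Pi.single i ξ) - H h
  set W := 1 + ‖h‖
  have hW : 1 ≤ W := by simp [W]
  have hdabs : |d| ≤ 2 * B * W * |ξ| :=
    calc |d| = |(d - ξ * G i h) + ξ * G i h| := by rw [sub_add_cancel]
      _ ≤ B * ξ ^ 2 + |ξ| * (B * W) := (abs_add_le _ _).trans (add_le_add hd
          ((abs_mul _ _).trans_le (by gcongr; exact hH.abs_gradient_le i h)))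
      _ ≤ B * (|ξ| * W) + |ξ| * (B * W) := by
          rw [← sq_abs, sq]; gcongr; exact hξ.trans hW
      _ = 2 * B * W * |ξ| := by ring
  have hd2 : d ^ 2 ≤ 4 * B ^ 2 * ξ ^ 2 * W ^ 2 := by
    rw [← sq_abs d, ← sq_abs ξ]
    exact (pow_le_pow_left₀ (abs_nonneg d) hdabs 2).trans_eq (by ring)
  have hsigmoid : |(acceptProb H (Pi.single i ξ) h : ℝ) - (1 / 2 + -d / 4)| ≤ d ^ 2 := by
    rw [← neg_sq d]
    convert abs_sigmoid_sub_linear_le (-d) using 3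
    exact congrArg sigmoid (neg_sub _ _).symm
  have hBξ : B * ξ ^ 2 ≤ B * ξ ^ 2 * W ^ 2 :=
    le_mul_of_one_le_right (by positivity) (one_le_pow₀ hW)
  have hd4 : |(d - ξ * G i h) / 4| ≤ B * ξ ^ 2 := by
    rw [abs_div, abs_of_pos (four_pos : (0 : ℝ) < 4)]
    linarith [abs_nonneg (d - ξ * G i h)]
  calc _ = |((acceptProb H (Pi.single i ξ) h : ℝ) - (1 / 2 + -d / 4)) - (d - ξ * G i h) / 4| := by
        congr 1; ring
    _ ≤ d ^ 2 + B * ξ ^ 2 := (abs_sub _ _).trans (add_le_add hsigmoid hd4)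
    _ ≤ _ := by linarith

/-- A measurable cost `θ ≥ 0` vanishing at `0`, with derivative `θ'` in the sense of a one-sided
quadratic bound. -/
structure IsSemiconcaveCost (θ θ' : ℝ → ℝ) (K : ℝ) : Prop where
  measurable : Measurable θ
  measurable_deriv : Measurable θ'
  nonneg : ∀ s, 0 ≤ θ s
  zero : θ 0 = 0
  add_le : ∀ s ξ, θ (s + ξ) ≤ θ s + ξ * θ' s + K * ξ ^ 2

namespace IsSemiconcaveCost

variable {θ θ' : ℝ → ℝ} {K : ℝ}

lemma sq_deriv_le (hθ : IsSemiconcaveCost θ θ' K) (s : ℝ) : θ' s ^ 2 ≤ 4 * K * θ s := by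
  have := discrim_le_zero fun ξ => ((hθ.nonneg (s + ξ)).trans (hθ.add_le s ξ)).trans_eq
    (by ring : _ = K * (ξ * ξ) + θ' s * ξ + θ s)
  rw [discrim] at this
  linarith

lemma deriv_zero (hθ : IsSemiconcaveCost θ θ' K) : θ' 0 = 0 := by
  simpa [hθ.zero, sq_nonpos_iff] using hθ.sq_deriv_le 0

lemma le_mul_sq (hθ : IsSemiconcaveCost θ θ' K) (s : ℝ) : θ s ≤ K * s ^ 2 := by
  simpa [hθ.zero, hθ.deriv_zero] using hθ.add_le 0 s

lemma const_nonneg (hθ : IsSemiconcaveCost θ θ' K) : 0 ≤ K := by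
  simpa using (hθ.nonneg 1).trans (hθ.le_mul_sq 1)

lemma abs_deriv_le (hθ : IsSemiconcaveCost θ θ' K) (s : ℝ) : |θ' s| ≤ 2 * K * |s| := by
  have hK := hθ.const_nonneg
  refine abs_le_of_sq_le_sq (b := 2 * K * |s|) ?_ (by positivity)
  calc θ' s ^ 2 ≤ 4 * K * (K * s ^ 2) := (hθ.sq_deriv_le s).trans (by gcongr; exact hθ.le_mul_sq s)
    _ = (2 * K * |s|) ^ 2 := by rw [mul_pow, sq_abs]; ring

end IsSemiconcaveCost

end SingleSite

/-! ### Couplings of almost minimal cost -/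

section CoupledCost

variable {ι : Type*}

/-- The local cost `∑ θ_i(δ_i)` of a difference field `δ`. -/
def fieldCost [Fintype ι] (θ : ι → ℝ → ℝ) (δ : ι → ℝ) : ℝ := ∑ i, θ i (δ i)

/-- The contribution of the site `i` to minus the drift of `fieldCost` along the coupled gradient
flows `dh = -G h dt`, `dh̃ = -G̃ h̃ dt` driven by the same noise. -/
def siteDrift (θ' : ι → ℝ → ℝ) (G Gt : ι → (ι → ℝ) → ℝ) (i : ι) (ω : (ι → ℝ) × (ι → ℝ)) : ℝ :=
  θ' i (ω.1 i - ω.2 i) * (G i ω.1 - Gt i ω.2)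

lemma barkerMove_single (H : (ι → ℝ) → ℝ) (i : ι) (ξ : ℝ) (h : ι → ℝ) (t : unitInterval) :
    barkerMove H (Pi.single i ξ) (h, t)
      = h + Pi.single i (ξ * (Set.Iio (acceptProb H (Pi.single i ξ) h)).indicator 1 t) := by
  by_cases ht : t < acceptProb H (Pi.single i ξ) h <;> simp [barkerMove, ht]

variable [Fintype ι] {θ θ' : ι → ℝ → ℝ} {K : ℝ}

lemma fieldCost_add_single (θ : ι → ℝ → ℝ) (δ : ι → ℝ) (i : ι) (r : ℝ) :
    fieldCost θ (δ + Pi.single i r) = fieldCost θ δ + (θ i (δ i + r) - θ i (δ i)) := by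
  rw [fieldCost, fieldCost, ← sub_eq_iff_eq_add', ← Finset.sum_sub_distrib,
    Finset.sum_eq_single i (fun j _ hj => by simp [Pi.single_eq_of_ne hj]) (by simp)]
  simp

/-- Simultaneous acceptance leaves the difference field unchanged, so that only the discrepancy
between the two acceptance indicators contributes. -/
lemma fieldCost_barkerMove_sub_le (hθ : ∀ i, IsSemiconcaveCost (θ i) (θ' i) K)
    (H Ht : (ι → ℝ) → ℝ) (i : ι) (ξ : ℝ) (ω : (ι → ℝ) × (ι → ℝ)) (t : unitInterval) :
    fieldCost θ (barkerMove H (Pi.single i ξ) (ω.1, t) - barkerMove Ht (Pi.single i ξ) (ω.2, t))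
      ≤ fieldCost θ (ω.1 - ω.2)
        + (ξ * θ' i (ω.1 i - ω.2 i) * acceptDiff H Ht (Pi.single i ξ) (ω, t)
          + K * ξ ^ 2 * |acceptDiff H Ht (Pi.single i ξ) (ω, t)|) := by
  have hmove : barkerMove H (Pi.single i ξ) (ω.1, t) - barkerMove Ht (Pi.single i ξ) (ω.2, t)
      = ω.1 - ω.2 + Pi.single i (ξ * acceptDiff H Ht (Pi.single i ξ) (ω, t)) := by
    rw [barkerMove_single, barkerMove_single, add_sub_add_comm, ← Pi.single_sub, ← mul_sub]
    rfl
  rw [hmove, fieldCost_add_single, Pi.sub_apply, ← sq_acceptDiff]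
  linarith [(hθ i).add_le (ω.1 i - ω.2 i) (ξ * acceptDiff H Ht (Pi.single i ξ) (ω, t))]

lemma abs_apply_sub_apply_le (ω : (ι → ℝ) × (ι → ℝ)) (i : ι) :
    |ω.1 i - ω.2 i| ≤ 2 * (1 + ‖ω‖) := by
  have h1 := (norm_le_pi_norm ω.1 i).trans (norm_fst_le ω)
  have h2 := (norm_le_pi_norm ω.2 i).trans (norm_snd_le ω)
  rw [Real.norm_eq_abs] at h1 h2
  exact (abs_sub _ _).trans (by linarith)

lemma abs_deriv_apply_sub_apply_le (hθ : ∀ i, IsSemiconcaveCost (θ i) (θ' i) K)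
    (ω : (ι → ℝ) × (ι → ℝ)) (i : ι) : |θ' i (ω.1 i - ω.2 i)| ≤ 4 * K * (1 + ‖ω‖) := by
  have hK := (hθ i).const_nonneg
  calc _ ≤ 2 * K * |ω.1 i - ω.2 i| := (hθ i).abs_deriv_le _
    _ ≤ 2 * K * (2 * (1 + ‖ω‖)) := by gcongr; exact abs_apply_sub_apply_le ω i
    _ = _ := by ring

variable {H Ht : (ι → ℝ) → ℝ} {G Gt : ι → (ι → ℝ) → ℝ} {B : ℝ}

lemma abs_gradient_sub_gradient_le (hH : HasQuadraticExpansion H G B)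
    (hHt : HasQuadraticExpansion Ht Gt B) (i : ι) (ω : (ι → ℝ) × (ι → ℝ)) :
    |G i ω.1 - Gt i ω.2| ≤ 2 * B * (1 + ‖ω‖) := by
  have hB := hH.nonneg i
  calc |G i ω.1 - Gt i ω.2| ≤ B * (1 + ‖ω.1‖) + B * (1 + ‖ω.2‖) :=
        (abs_sub _ _).trans (add_le_add (hH.abs_gradient_le i _) (hHt.abs_gradient_le i _))
    _ ≤ B * (1 + ‖ω‖) + B * (1 + ‖ω‖) := by
        gcongr; exacts [norm_fst_le ω, norm_snd_le ω]
    _ = _ := by ring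

lemma abs_acceptProb_sub_acceptProb_sub_linear_le (hH : HasQuadraticExpansion H G B)
    (hHt : HasQuadraticExpansion Ht Gt B) (i : ι) {ξ : ℝ} (hξ : |ξ| ≤ 1)
    (ω : (ι → ℝ) × (ι → ℝ)) :
    |((acceptProb H (Pi.single i ξ) ω.1 : ℝ) - acceptProb Ht (Pi.single i ξ) ω.2)
        - -(ξ / 4) * (G i ω.1 - Gt i ω.2)|
      ≤ 2 * (B + 4 * B ^ 2) * ξ ^ 2 * (1 + ‖ω‖) ^ 2 := by
  have hB := hH.nonneg i
  have h1 : (B + 4 * B ^ 2) * ξ ^ 2 * (1 + ‖ω.1‖) ^ 2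
      ≤ (B + 4 * B ^ 2) * ξ ^ 2 * (1 + ‖ω‖) ^ 2 := by
    gcongr; exact norm_fst_le ω
  have h2 : (B + 4 * B ^ 2) * ξ ^ 2 * (1 + ‖ω.2‖) ^ 2
      ≤ (B + 4 * B ^ 2) * ξ ^ 2 * (1 + ‖ω‖) ^ 2 := by
    gcongr; exact norm_snd_le ω
  calc _ = |((acceptProb H (Pi.single i ξ) ω.1 : ℝ) - (1 / 2 - ξ * G i ω.1 / 4))
          - ((acceptProb Ht (Pi.single i ξ) ω.2 : ℝ) - (1 / 2 - ξ * Gt i ω.2 / 4))| := by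
        congr 1; ring
    _ ≤ _ := (abs_sub _ _).trans (add_le_add ((hH.abs_acceptProb_sub_le i ω.1 hξ).trans h1)
        ((hHt.abs_acceptProb_sub_le i ω.2 hξ).trans h2))
    _ = _ := by ring

lemma abs_acceptProb_sub_acceptProb_le (hH : HasQuadraticExpansion H G B)
    (hHt : HasQuadraticExpansion Ht Gt B) (i : ι) {ξ : ℝ} (hξ : |ξ| ≤ 1)
    (ω : (ι → ℝ) × (ι → ℝ)) :
    |(acceptProb H (Pi.single i ξ) ω.1 : ℝ) - acceptProb Ht (Pi.single i ξ) ω.2|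
      ≤ 3 * (B + 4 * B ^ 2) * |ξ| * (1 + ‖ω‖) ^ 2 := by
  have hB := hH.nonneg i
  set W := 1 + ‖ω‖
  have hW : 1 ≤ W := by simp [W]
  have hgrad : |-(ξ / 4) * (G i ω.1 - Gt i ω.2)| ≤ |ξ| * (B + 4 * B ^ 2) * W ^ 2 :=
    calc _ = |ξ| / 4 * |G i ω.1 - Gt i ω.2| := by
          rw [abs_mul, abs_neg, abs_div, abs_of_pos (four_pos : (0 : ℝ) < 4)]
      _ ≤ |ξ| / 4 * (2 * B * W) := by gcongr; exact abs_gradient_sub_gradient_le hH hHt i ω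
      _ ≤ |ξ| * B * W := by linarith [show 0 ≤ |ξ| * B * W by positivity]
      _ ≤ |ξ| * (B + 4 * B ^ 2) * W ^ 2 := by
          gcongr
          · linarith [sq_nonneg B]
          · exact le_self_pow₀ hW two_ne_zero
  have herror := abs_acceptProb_sub_acceptProb_sub_linear_le hH hHt i hξ ω
  have hξ2 : ξ ^ 2 ≤ |ξ| := (sq_abs ξ).symm.trans_le
    (pow_le_of_le_one (abs_nonneg ξ) hξ two_ne_zero)
  calc _ ≤ 2 * (B + 4 * B ^ 2) * ξ ^ 2 * W ^ 2 + |ξ| * (B + 4 * B ^ 2) * W ^ 2 := by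
        rw [← sub_add_cancel (_ - _ : ℝ) (-(ξ / 4) * (G i ω.1 - Gt i ω.2))]
        exact (abs_add_le _ _).trans (add_le_add herror hgrad)
    _ ≤ 2 * (B + 4 * B ^ 2) * |ξ| * W ^ 2 + |ξ| * (B + 4 * B ^ 2) * W ^ 2 := by gcongr
    _ = _ := by ring

lemma mul_acceptProb_sub_add_mul_abs_le (hθ : ∀ i, IsSemiconcaveCost (θ i) (θ' i) K)
    (hH : HasQuadraticExpansion H G B) (hHt : HasQuadraticExpansion Ht Gt B) (i : ι) {ξ : ℝ}
    (hξ : |ξ| ≤ 1) (ω : (ι → ℝ) × (ι → ℝ)) :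
    let Δ : ℝ := acceptProb H (Pi.single i ξ) ω.1 - acceptProb Ht (Pi.single i ξ) ω.2
    ξ * θ' i (ω.1 i - ω.2 i) * Δ + K * ξ ^ 2 * |Δ|
      ≤ -(ξ ^ 2 / 4) * siteDrift θ' G Gt i ω
        + |ξ| ^ 3 * (11 * K * (B + 4 * B ^ 2)) * (1 + ‖ω‖) ^ 3 := by
  intro Δ
  set M := B + 4 * B ^ 2
  set W := 1 + ‖ω‖
  have hW : 1 ≤ W := by simp [W]
  have hB := hH.nonneg i
  have hK := (hθ i).const_nonneg
  have hξ2 : ξ ^ 2 = |ξ| ^ 2 := (sq_abs ξ).symm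
  set e := Δ - -(ξ / 4) * (G i ω.1 - Gt i ω.2) with he
  have hebound : |e| ≤ 2 * M * |ξ| ^ 2 * W ^ 2 :=
    hξ2 ▸ abs_acceptProb_sub_acceptProb_sub_linear_le hH hHt i hξ ω
  have herror : ξ * θ' i (ω.1 i - ω.2 i) * e ≤ 8 * K * M * |ξ| ^ 3 * W ^ 3 :=
    calc ξ * θ' i (ω.1 i - ω.2 i) * e ≤ |ξ| * |θ' i (ω.1 i - ω.2 i)| * |e| := by
          rw [← abs_mul, ← abs_mul]; exact le_abs_self _
      _ ≤ |ξ| * (4 * K * W) * (2 * M * |ξ| ^ 2 * W ^ 2) := by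
          gcongr; exact abs_deriv_apply_sub_apply_le hθ ω i
      _ = 8 * K * M * |ξ| ^ 3 * W ^ 3 := by ring
  have hsecond : K * ξ ^ 2 * |Δ| ≤ 3 * K * M * |ξ| ^ 3 * W ^ 3 :=
    calc K * ξ ^ 2 * |Δ| ≤ K * |ξ| ^ 2 * (3 * M * |ξ| * W ^ 3) := by
          rw [hξ2]
          gcongr
          refine (abs_acceptProb_sub_acceptProb_le hH hHt i hξ ω).trans ?_
          gcongr
          norm_num
      _ = 3 * K * M * |ξ| ^ 3 * W ^ 3 := by ring
  have hlinear : ξ * θ' i (ω.1 i - ω.2 i) * Δ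
      = -(ξ ^ 2 / 4) * siteDrift θ' G Gt i ω + ξ * θ' i (ω.1 i - ω.2 i) * e := by
    rw [siteDrift, he]; ring
  linarith

end CoupledCost

section Moments

variable {E : Type*}

lemma one_add_norm_pow_le_add [NormedAddCommGroup E] (ω : E × E) (n : ℕ) :
    (1 + ‖ω‖) ^ n ≤ (1 + ‖ω.1‖) ^ n + (1 + ‖ω.2‖) ^ n := by
  rcases max_choice ‖ω.1‖ ‖ω.2‖ with h | h <;> rw [Prod.norm_def, h]
  · exact le_add_of_nonneg_right (by positivity)
  · exact le_add_of_nonneg_left (by positivity)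

variable [MeasurableSpace E] {P Pt : Measure E} {μ : Measure (E × E)} {f : E → ℝ}

lemma IsCoupling.integrable_comp_fst (hμ : IsCoupling μ P Pt) (hf : Integrable f P) :
    Integrable (fun ω => f ω.1) μ :=
  Integrable.comp_measurable (hμ.2.1 ▸ hf) measurable_fst

lemma IsCoupling.integrable_comp_snd (hμ : IsCoupling μ P Pt) (hf : Integrable f Pt) :
    Integrable (fun ω => f ω.2) μ :=
  Integrable.comp_measurable (hμ.2.2 ▸ hf) measurable_snd

lemma IsCoupling.integral_comp_fst (hμ : IsCoupling μ P Pt) (hf : Integrable f P) :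
    ∫ ω, f ω.1 ∂μ = ∫ h, f h ∂P := by
  rw [← hμ.2.1, integral_map measurable_fst.aemeasurable (hμ.2.1 ▸ hf.aestronglyMeasurable)]

lemma IsCoupling.integral_comp_snd (hμ : IsCoupling μ P Pt) (hf : Integrable f Pt) :
    ∫ ω, f ω.2 ∂μ = ∫ h, f h ∂Pt := by
  rw [← hμ.2.2, integral_map measurable_snd.aemeasurable (hμ.2.2 ▸ hf.aestronglyMeasurable)]

variable [NormedAddCommGroup E] {n : ℕ}

lemma IsCoupling.integrable_one_add_norm_pow [OpensMeasurableSpace E] (hμ : IsCoupling μ P Pt)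
    (hP : Integrable (fun h => (1 + ‖h‖) ^ n) P) (hPt : Integrable (fun h => (1 + ‖h‖) ^ n) Pt) :
    Integrable (fun ω => (1 + ‖ω‖) ^ n) μ := by
  refine ((hμ.integrable_comp_fst hP).add (hμ.integrable_comp_snd hPt)).mono' ?_
    (ae_of_all _ fun ω => ?_)
  · simp only [Prod.norm_def]
    exact (((measurable_norm.comp measurable_fst).max
      (measurable_norm.comp measurable_snd)).const_add 1 |>.pow_const n).aestronglyMeasurable
  · rw [Real.norm_of_nonneg (by positivity)]
    exact one_add_norm_pow_le_add ω n

lemma IsCoupling.integral_one_add_norm_pow_le (hμ : IsCoupling μ P Pt)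
    (hP : Integrable (fun h => (1 + ‖h‖) ^ n) P) (hPt : Integrable (fun h => (1 + ‖h‖) ^ n) Pt) :
    ∫ ω, (1 + ‖ω‖) ^ n ∂μ ≤ ∫ h, (1 + ‖h‖) ^ n ∂P + ∫ h, (1 + ‖h‖) ^ n ∂Pt := by
  rw [← hμ.integral_comp_fst hP, ← hμ.integral_comp_snd hPt,
    ← integral_add (hμ.integrable_comp_fst hP) (hμ.integrable_comp_snd hPt)]
  exact integral_mono_of_nonneg (ae_of_all _ fun ω => by positivity)
    ((hμ.integrable_comp_fst hP).add (hμ.integrable_comp_snd hPt))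
    (ae_of_all _ fun ω => one_add_norm_pow_le_add ω n)

end Moments

section ExpectedCost

variable {ι : Type*} [Fintype ι] {θ θ' : ι → ℝ → ℝ} {K : ℝ} {μ : Measure ((ι → ℝ) × (ι → ℝ))}

lemma measurable_fieldCost (hθ : ∀ i, IsSemiconcaveCost (θ i) (θ' i) K) :
    Measurable fun ω : (ι → ℝ) × (ι → ℝ) => fieldCost θ (ω.1 - ω.2) :=
  Finset.measurable_sum _ fun i _ => (hθ i).measurable.comp (by fun_prop)

lemma fieldCost_nonneg (hθ : ∀ i, IsSemiconcaveCost (θ i) (θ' i) K) (δ : ι → ℝ) :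
    0 ≤ fieldCost θ δ :=
  Finset.sum_nonneg fun i _ => (hθ i).nonneg _

lemma integrable_fieldCost (hθ : ∀ i, IsSemiconcaveCost (θ i) (θ' i) K)
    (hμ : Integrable (fun ω => (1 + ‖ω‖) ^ 3) μ) :
    Integrable (fun ω => fieldCost θ (ω.1 - ω.2)) μ := by
  refine integrable_finsetSum _ fun i _ => (hμ.const_mul (4 * K)).mono'
    ((hθ i).measurable.comp (by fun_prop)).aestronglyMeasurable (ae_of_all _ fun ω => ?_)
  have hK := (hθ i).const_nonneg
  have hW : 1 ≤ 1 + ‖ω‖ := le_add_of_nonneg_right (norm_nonneg _)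
  rw [Real.norm_of_nonneg ((hθ i).nonneg _)]
  calc θ i ((ω.1 - ω.2) i) ≤ K * |ω.1 i - ω.2 i| ^ 2 := by
        rw [sq_abs]; exact (hθ i).le_mul_sq _
    _ ≤ K * (2 * (1 + ‖ω‖)) ^ 2 := by gcongr; exact abs_apply_sub_apply_le ω i
    _ = 4 * K * (1 + ‖ω‖) ^ 2 := by ring
    _ ≤ 4 * K * (1 + ‖ω‖) ^ 3 := by gcongr; norm_num

variable {H Ht : (ι → ℝ) → ℝ} {G Gt : ι → (ι → ℝ) → ℝ} {B : ℝ}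

lemma integrable_siteDrift (hθ : ∀ i, IsSemiconcaveCost (θ i) (θ' i) K)
    (hH : HasQuadraticExpansion H G B) (hHt : HasQuadraticExpansion Ht Gt B)
    (hμ : Integrable (fun ω => (1 + ‖ω‖) ^ 3) μ) (i : ι) :
    Integrable (siteDrift θ' G Gt i) μ := by
  have hmeas : Measurable (siteDrift θ' G Gt i) :=
    ((hθ i).measurable_deriv.comp (by fun_prop)).mul
      (((hH.measurable_gradient i).comp measurable_fst).sub
        ((hHt.measurable_gradient i).comp measurable_snd))
  refine (hμ.const_mul (8 * K * B)).mono' hmeas.aestronglyMeasurable (ae_of_all _ fun ω => ?_)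
  have hB := hH.nonneg i
  have hK := (hθ i).const_nonneg
  have hW : 1 ≤ 1 + ‖ω‖ := le_add_of_nonneg_right (norm_nonneg _)
  calc |siteDrift θ' G Gt i ω| ≤ 4 * K * (1 + ‖ω‖) * (2 * B * (1 + ‖ω‖)) := by
        rw [siteDrift, abs_mul]
        gcongr
        exacts [abs_deriv_apply_sub_apply_le hθ ω i, abs_gradient_sub_gradient_le hH hHt i ω]
    _ = 8 * K * B * (1 + ‖ω‖) ^ 2 := by ring
    _ ≤ 8 * K * B * (1 + ‖ω‖) ^ 3 := by gcongr; norm_num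

lemma integrable_deriv_mul_acceptDiff_add
    (hθ : ∀ i, IsSemiconcaveCost (θ i) (θ' i) K) (hH : Measurable H) (hHt : Measurable Ht)
    (hμ : Integrable (fun ω => (1 + ‖ω‖) ^ 3) μ) (i : ι) {ξ : ℝ} (hξ : |ξ| ≤ 1) :
    Integrable (fun x : ((ι → ℝ) × (ι → ℝ)) × unitInterval =>
      ξ * θ' i (x.1.1 i - x.1.2 i) * acceptDiff H Ht (Pi.single i ξ) x
        + K * ξ ^ 2 * |acceptDiff H Ht (Pi.single i ξ) x|) (μ.prod volume) := by
  have hdiff := measurable_acceptDiff hH hHt (Pi.single i ξ)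
  have hderiv : Measurable fun x : ((ι → ℝ) × (ι → ℝ)) × unitInterval =>
      θ' i (x.1.1 i - x.1.2 i) := (hθ i).measurable_deriv.comp (by fun_prop)
  refine ((hμ.comp_fst volume).const_mul (5 * K)).mono'
    (((hderiv.const_mul ξ).mul hdiff).add (hdiff.abs.const_mul _)).aestronglyMeasurable
    (ae_of_all _ fun x => ?_)
  have hK := (hθ i).const_nonneg
  have hW : 1 ≤ 1 + ‖x.1‖ := le_add_of_nonneg_right (norm_nonneg _)
  have hone := abs_acceptDiff_le_one H Ht (Pi.single i ξ) x
  calc _ ≤ |ξ| * |θ' i (x.1.1 i - x.1.2 i)| * |acceptDiff H Ht (Pi.single i ξ) x|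
          + K * |ξ| ^ 2 * |acceptDiff H Ht (Pi.single i ξ) x| := by
        refine (norm_add_le _ _).trans_eq ?_
        simp only [Real.norm_eq_abs, abs_mul, abs_abs, abs_pow, abs_of_nonneg hK]
    _ ≤ 1 * (4 * K * (1 + ‖x.1‖)) * 1 + K * 1 ^ 2 * 1 := by
        gcongr; exact abs_deriv_apply_sub_apply_le hθ x.1 i
    _ ≤ 5 * K * (1 + ‖x.1‖) := by linarith [mul_le_mul_of_nonneg_left hW hK]
    _ ≤ 5 * K * (1 + ‖x.1‖) ^ 3 := by gcongr; exact le_self_pow₀ hW three_ne_zero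

lemma integral_mul_acceptDiff_add_mul_abs_le (hθ : ∀ i, IsSemiconcaveCost (θ i) (θ' i) K)
    (hH : HasQuadraticExpansion H G B) (hHt : HasQuadraticExpansion Ht Gt B) (i : ι) {ξ : ℝ}
    (hξ : |ξ| ≤ 1) (ω : (ι → ℝ) × (ι → ℝ)) :
    ∫ t, (ξ * θ' i (ω.1 i - ω.2 i) * acceptDiff H Ht (Pi.single i ξ) (ω, t)
        + K * ξ ^ 2 * |acceptDiff H Ht (Pi.single i ξ) (ω, t)|)
      ≤ -(ξ ^ 2 / 4) * siteDrift θ' G Gt i ω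
        + |ξ| ^ 3 * (11 * K * (B + 4 * B ^ 2)) * (1 + ‖ω‖) ^ 3 := by
  have hintegrable : Integrable fun t => acceptDiff H Ht (Pi.single i ξ) (ω, t) :=
    (integrable_const (1 : ℝ)).mono' ((measurable_acceptDiff hH.measurable hHt.measurable
      _).comp measurable_prodMk_left).aestronglyMeasurable
      (ae_of_all _ fun t => abs_acceptDiff_le_one H Ht _ (ω, t))
  rw [integral_add (hintegrable.const_mul _) (hintegrable.abs.const_mul _), integral_const_mul,
    integral_const_mul, integral_acceptDiff, integral_abs_acceptDiff]
  exact mul_acceptProb_sub_add_mul_abs_le hθ hH hHt i hξ ω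

lemma integral_fieldCost_coupledMove_le [SFinite μ]
    (hθ : ∀ i, IsSemiconcaveCost (θ i) (θ' i) K) (hH : HasQuadraticExpansion H G B)
    (hHt : HasQuadraticExpansion Ht Gt B) (hμ : Integrable (fun ω => (1 + ‖ω‖) ^ 3) μ)
    (i : ι) {ξ : ℝ} (hξ : |ξ| ≤ 1) :
    ∫ ω, fieldCost θ (ω.1 - ω.2) ∂coupledMove μ H Ht (Pi.single i ξ)
      ≤ ∫ ω, fieldCost θ (ω.1 - ω.2) ∂μ
        + (-(ξ ^ 2 / 4) * ∫ ω, siteDrift θ' G Gt i ω ∂μ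
          + |ξ| ^ 3 * (11 * K * (B + 4 * B ^ 2)) * ∫ ω, (1 + ‖ω‖) ^ 3 ∂μ) := by
  set v : ι → ℝ := Pi.single i ξ
  have hcost := integrable_fieldCost hθ hμ
  have hchange := integrable_deriv_mul_acceptDiff_add hθ hH.measurable hHt.measurable hμ i hξ
  have hdrift := (integrable_siteDrift hθ hH hHt hμ i).const_mul (-(ξ ^ 2 / 4))
  have herror := hμ.const_mul (|ξ| ^ 3 * (11 * K * (B + 4 * B ^ 2)))
  calc _ ≤ ∫ x, (fieldCost θ (x.1.1 - x.1.2)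
          + (ξ * θ' i (x.1.1 i - x.1.2 i) * acceptDiff H Ht v x
            + K * ξ ^ 2 * |acceptDiff H Ht v x|)) ∂μ.prod volume := by
        rw [coupledMove, integral_map
          (measurable_barkerMove_pair hH.measurable hHt.measurable v).aemeasurable
          (measurable_fieldCost hθ).aestronglyMeasurable]
        exact integral_mono_of_nonneg (ae_of_all _ fun _ => fieldCost_nonneg hθ _)
          ((hcost.comp_fst volume).add hchange)
          (ae_of_all _ fun x => fieldCost_barkerMove_sub_le hθ H Ht i ξ x.1 x.2)
    _ = ∫ ω, fieldCost θ (ω.1 - ω.2) ∂μ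
          + ∫ ω, (∫ t, (ξ * θ' i (ω.1 i - ω.2 i) * acceptDiff H Ht v (ω, t)
            + K * ξ ^ 2 * |acceptDiff H Ht v (ω, t)|)) ∂μ := by
        rw [integral_add (hcost.comp_fst volume) hchange, integral_prod _ hchange,
          integral_fun_fst (fun ω : (ι → ℝ) × (ι → ℝ) => fieldCost θ (ω.1 - ω.2)),
          probReal_univ, one_smul]
    _ ≤ _ := by
        rw [← integral_const_mul, ← integral_const_mul, ← integral_add hdrift herror]
        gcongr
        exacts [hchange.integral_prod_left, hdrift.add herror,
          fun ω => integral_mul_acceptDiff_add_mul_abs_le hθ hH hHt i hξ ω]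

end ExpectedCost

section StationaryCoupling

lemma exists_almost_optimal_coupling {E : Type*} [MeasurableSpace E] (P Pt : Measure E)
    [IsProbabilityMeasure P] [IsProbabilityMeasure Pt] {f : E × E → ℝ} (hf : ∀ ω, 0 ≤ f ω)
    {δ : ℝ} (hδ : 0 < δ) :
    ∃ μ, IsCoupling μ P Pt ∧ ∀ μ', IsCoupling μ' P Pt → ∫ ω, f ω ∂μ ≤ ∫ ω, f ω ∂μ' + δ := by
  set costs : Set ℝ := (fun μ => ∫ ω, f ω ∂μ) '' {μ | IsCoupling μ P Pt}
  have hne : costs.Nonempty :=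
    ⟨_, P.prod Pt, ⟨inferInstance, Measure.map_fst_prod.trans (by simp),
      Measure.map_snd_prod.trans (by simp)⟩, rfl⟩
  have hbdd : BddBelow costs := ⟨0, by
    rintro _ ⟨μ, -, rfl⟩
    exact integral_nonneg hf⟩
  obtain ⟨_, ⟨μ, hμ, rfl⟩, hlt⟩ := Real.lt_sInf_add_pos hne hδ
  exact ⟨μ, hμ, fun μ' hμ' => hlt.le.trans
    (by gcongr; exact csInf_le hbdd (Set.mem_image_of_mem _ hμ'))⟩

variable {ι : Type*} [Fintype ι] {θ θ' : ι → ℝ → ℝ} {K : ℝ} {H Ht : (ι → ℝ) → ℝ}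
  {G Gt : ι → (ι → ℝ) → ℝ} {B : ℝ} {ν νt : Measure (ι → ℝ)} [ν.IsAddRightInvariant]
  [νt.IsAddRightInvariant]

/-- Averaging the coupled moves by `±τ` yields another coupling, whose cost is lower by
`τ² / 4` times the drift, up to `O(τ³)`. -/
lemma IsCoupling.integral_siteDrift_le {μ : Measure ((ι → ℝ) × (ι → ℝ))}
    (hμ : IsCoupling μ (gibbs ν H) (gibbs νt Ht)) (hθ : ∀ i, IsSemiconcaveCost (θ i) (θ' i) K)
    (hH : HasQuadraticExpansion H G B) (hHt : HasQuadraticExpansion Ht Gt B)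
    (hP : Integrable (fun h => (1 + ‖h‖) ^ 3) (gibbs ν H))
    (hPt : Integrable (fun h => (1 + ‖h‖) ^ 3) (gibbs νt Ht)) {τ : ℝ} (hτ : 0 < τ) (hτ1 : τ ≤ 1)
    (hopt : ∀ μ', IsCoupling μ' (gibbs ν H) (gibbs νt Ht) →
      ∫ ω, fieldCost θ (ω.1 - ω.2) ∂μ ≤ ∫ ω, fieldCost θ (ω.1 - ω.2) ∂μ' + τ ^ 3) (i : ι) :
    ∫ ω, siteDrift θ' G Gt i ω ∂μ
      ≤ 4 * τ * (1 + 11 * K * (B + 4 * B ^ 2)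
          * (∫ h, (1 + ‖h‖) ^ 3 ∂gibbs ν H + ∫ h, (1 + ‖h‖) ^ 3 ∂gibbs νt Ht)) := by
  have := hμ.1
  have hB := hH.nonneg i
  have hK := (hθ i).const_nonneg
  have hmoment := hμ.integral_one_add_norm_pow_le hP hPt
  have hstep := fun ξ : ℝ => integral_fieldCost_coupledMove_le (ξ := ξ) hθ hH hHt
    (hμ.integrable_one_add_norm_pow hP hPt) i
  have hplus := hstep τ (abs_le.mpr ⟨by linarith, hτ1⟩)
  have hminus := hstep (-τ) (abs_le.mpr ⟨by linarith, by linarith⟩)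
  rw [Pi.single_neg, abs_neg, neg_sq] at hminus
  rw [abs_of_pos hτ] at hplus hminus
  have hμ' := hμ.half_smul_coupledMove_add_neg hH.measurable hHt.measurable (Pi.single i τ)
  have hintegrable := (integrable_smul_measure (by simp) (by simp)).mp
    (integrable_fieldCost hθ (hμ'.integrable_one_add_norm_pow hP hPt))
  have hmean := hopt _ hμ'
  rw [integral_smul_measure, integral_add_measure hintegrable.left_of_add_measure
    hintegrable.right_of_add_measure, ENNReal.toReal_inv, ENNReal.toReal_ofNat, smul_eq_mul]
    at hmean
  have herror := mul_le_mul_of_nonneg_left hmoment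
    (show 0 ≤ τ ^ 3 * (11 * K * (B + 4 * B ^ 2)) by positivity)
  refine le_of_mul_le_mul_left ?_ (sq_pos_of_pos hτ)
  linarith

theorem exists_stationary_coupling [IsProbabilityMeasure (gibbs ν H)]
    [IsProbabilityMeasure (gibbs νt Ht)] (hθ : ∀ i, IsSemiconcaveCost (θ i) (θ' i) K)
    (hH : HasQuadraticExpansion H G B) (hHt : HasQuadraticExpansion Ht Gt B)
    (hP : Integrable (fun h => (1 + ‖h‖) ^ 3) (gibbs ν H))
    (hPt : Integrable (fun h => (1 + ‖h‖) ^ 3) (gibbs νt Ht)) {ρ : ℝ} (hρ : 0 < ρ) :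
    ∃ μ, IsCoupling μ (gibbs ν H) (gibbs νt Ht) ∧
      ∑ i, ∫ ω, siteDrift θ' G Gt i ω ∂μ ≤ ρ := by
  set A : ℝ := Fintype.card ι * (4 * (1 + 11 * K * (B + 4 * B ^ 2)
    * (∫ h, (1 + ‖h‖) ^ 3 ∂gibbs ν H + ∫ h, (1 + ‖h‖) ^ 3 ∂gibbs νt Ht)))
  obtain ⟨τ, ⟨hτ, hτ1⟩, hτρ⟩ : ∃ τ ∈ Set.Ioc (0 : ℝ) 1, A * τ ≤ ρ := by
    refine ⟨min 1 (ρ / (|A| + 1)), ⟨by positivity, min_le_left _ _⟩, ?_⟩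
    calc A * min 1 (ρ / (|A| + 1)) ≤ (|A| + 1) * (ρ / (|A| + 1)) := by
          gcongr
          exacts [(le_abs_self A).trans (lt_add_one _).le, min_le_right _ _]
      _ = ρ := mul_div_cancel₀ ρ (by positivity)
  obtain ⟨μ, hμ, hopt⟩ := exists_almost_optimal_coupling (gibbs ν H) (gibbs νt Ht)
    (fun ω => fieldCost_nonneg hθ (ω.1 - ω.2)) (pow_pos hτ 3)
  refine ⟨μ, hμ, (Finset.sum_le_card_nsmul _ _ _ fun i _ =>
    hμ.integral_siteDrift_le hθ hH hHt hP hPt hτ hτ1 hopt i).trans ?_⟩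
  rw [Finset.card_univ, nsmul_eq_mul]
  linarith

end StationaryCoupling

/-! ### Elliptic potentials and the lattice -/

section Potential

/-- `V` is differentiable and the difference quotients of `V'` lie in `[a, A]`: for `V ∈ C²` this
says `a ≤ V'' ≤ A`. -/
structure IsElliptic (V : ℝ → ℝ) (a A : ℝ) : Prop where
  pos : 0 < a
  differentiable : Differentiable ℝ V
  exists_slope : ∀ s t, ∃ k ∈ Set.Icc a A, deriv V t - deriv V s = k * (t - s)

variable {V : ℝ → ℝ} {a A : ℝ}

lemma IsElliptic.of_contDiff (hV : ContDiff ℝ 2 V) (ha : 0 < a)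
    (hbound : ∀ x, deriv (deriv V) x ∈ Set.Icc a A) : IsElliptic V a A := by
  have hdiff : Differentiable ℝ (deriv V) :=
    ((contDiff_succ_iff_deriv (n := 1)).mp hV).2.2.differentiable one_ne_zero
  have hlt : ∀ s t, s < t → ∃ k ∈ Set.Icc a A, deriv V t - deriv V s = k * (t - s) :=
    fun s t hst => by
      obtain ⟨c, -, hc⟩ := exists_deriv_eq_slope (deriv V) hst hdiff.continuous.continuousOn
        hdiff.differentiableOn
      exact ⟨_, hbound c, by rw [hc, div_mul_cancel₀ _ (sub_ne_zero.mpr hst.ne')]⟩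
  refine ⟨ha, hV.differentiable two_ne_zero, fun s t => ?_⟩
  rcases lt_trichotomy s t with hst | rfl | hts
  · exact hlt s t hst
  · exact ⟨_, hbound s, by simp⟩
  · obtain ⟨k, hk, h⟩ := hlt t s hts
    exact ⟨k, hk, by linarith⟩

namespace IsElliptic

lemma pos_right (hV : IsElliptic V a A) : 0 < A := by
  obtain ⟨k, hk, -⟩ := hV.exists_slope 0 0
  exact hV.pos.trans_le (hk.1.trans hk.2)

/-- Cauchy's mean value theorem on `[0, 1]`, comparing the Taylor remainder with `u² / 2`. -/
lemma exists_taylor (hV : IsElliptic V a A) (s ξ : ℝ) :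
    ∃ k ∈ Set.Icc a A, V (s + ξ) = V s + ξ * deriv V s + k / 2 * ξ ^ 2 := by
  have hremainder : ∀ u, HasDerivAt (fun u => V (s + u * ξ) - u * ξ * deriv V s)
      (ξ * (deriv V (s + u * ξ) - deriv V s)) u := fun u => by
    have hline : HasDerivAt (fun u => s + u * ξ) ξ u := by
      simpa using ((hasDerivAt_id u).mul_const ξ).const_add s
    exact (((hV.differentiable _).hasDerivAt.comp u hline).sub
      (((hasDerivAt_id u).mul_const ξ).mul_const (deriv V s))).congr_deriv (by ring)
  have hsq : ∀ u : ℝ, HasDerivAt (fun u => u ^ 2 / 2) u u := fun u =>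
    ((hasDerivAt_pow 2 u).div_const 2).congr_deriv (by norm_num)
  obtain ⟨u, hu, heq⟩ := exists_ratio_hasDerivAt_eq_ratio_slope _ _ one_pos
    (fun u _ => (hremainder u).continuousAt.continuousWithinAt) (fun u _ => hremainder u) _ _
    (fun u _ => (hsq u).continuousAt.continuousWithinAt) (fun u _ => hsq u)
  obtain ⟨k, hk, hslope⟩ := hV.exists_slope s (s + u * ξ)
  refine ⟨k, hk, mul_right_cancel₀ hu.1.ne' ?_⟩
  rw [hslope] at heq
  simp only [one_mul, zero_mul, add_zero, sub_zero] at heq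
  linear_combination -heq

lemma abs_sub_sub_deriv_le (hV : IsElliptic V a A) (s ξ : ℝ) :
    |V (s + ξ) - V s - ξ * deriv V s| ≤ A * ξ ^ 2 := by
  obtain ⟨k, ⟨hak, hkA⟩, htaylor⟩ := hV.exists_taylor s ξ
  have hk : 0 < k := hV.pos.trans_le hak
  rw [htaylor, add_sub_right_comm, add_sub_cancel_left, add_sub_cancel_left,
    abs_of_nonneg (by positivity)]
  exact mul_le_mul_of_nonneg_right (by linarith) (sq_nonneg ξ)

lemma add_deriv_add_le (hV : IsElliptic V a A) (s ξ : ℝ) :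
    V s + ξ * deriv V s + a / 2 * ξ ^ 2 ≤ V (s + ξ) := by
  obtain ⟨k, hk, htaylor⟩ := hV.exists_taylor s ξ
  rw [htaylor]
  gcongr
  exact hk.1

lemma div_four_mul_sq_sub_le (hV : IsElliptic V a A) (s ξ : ℝ) :
    a / 4 * ξ ^ 2 - (deriv V s ^ 2 / a - V s) ≤ V (s + ξ) := by
  have ha := hV.pos
  have hsq : a / 4 * ξ ^ 2 + ξ * deriv V s + deriv V s ^ 2 / a
      = (a * ξ + 2 * deriv V s) ^ 2 / (4 * a) := by
    field_simp
    ring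
  have hsq_nonneg : 0 ≤ (a * ξ + 2 * deriv V s) ^ 2 / (4 * a) := by positivity
  linarith [hV.add_deriv_add_le s ξ]

lemma abs_deriv_le (hV : IsElliptic V a A) (s : ℝ) : |deriv V s| ≤ |deriv V 0| + A * |s| := by
  obtain ⟨k, ⟨hak, hkA⟩, hslope⟩ := hV.exists_slope 0 s
  rw [sub_zero, sub_eq_iff_eq_add'] at hslope
  rw [hslope]
  refine (abs_add_le _ _).trans ?_
  rw [abs_mul, abs_of_pos (hV.pos.trans_le hak)]
  gcongr

end IsElliptic

end Potential

section Lattice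

variable {D : Finset Z2}

lemma edgesOf_subset (D : Finset Z2) : edgesOf (D : Set Z2) ⊆
    ((D ×ˢ {(1, 0), (0, 1)}).image (fun p => (p.1, p.1 + p.2)) ∪
      (D ×ˢ {(1, 0), (0, 1)}).image (fun p => (p.1 - p.2, p.1)) : Finset (Z2 × Z2)) := by
  rintro ⟨x, y⟩ ⟨hdir, hD⟩
  simp only [Finset.coe_union, Finset.coe_image, Set.mem_union, Set.mem_image, Finset.mem_coe,
    Finset.mem_product, Finset.mem_insert, Finset.mem_singleton]
  have hsub : y - x = (1, 0) ∨ y - x = (0, 1) := by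
    simpa only [sub_eq_iff_eq_add'] using hdir
  rcases hD with hx | hy
  · exact .inl ⟨(x, y - x), ⟨hx, hsub⟩, by simp⟩
  · exact .inr ⟨(y, y - x), ⟨hy, hsub⟩, by simp⟩

lemma finite_edgesOf (D : Finset Z2) : (edgesOf (D : Set Z2)).Finite :=
  (Finset.finite_toSet _).subset (edgesOf_subset D)

/-- The finite set `D*` of edges with an endpoint in `D`. -/
def edgeFinset (D : Finset Z2) : Finset (Z2 × Z2) := (finite_edgesOf D).toFinset

lemma mem_edgeFinset {b : Z2 × Z2} : b ∈ edgeFinset D ↔ b ∈ edgesOf (D : Set Z2) :=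
  Set.Finite.mem_toFinset _

lemma card_edgeFinset_le (D : Finset Z2) : (edgeFinset D).card ≤ 4 * D.card := by
  have hdirs : (D ×ˢ ({(1, 0), (0, 1)} : Finset Z2)).card ≤ D.card * 2 :=
    (Finset.card_product _ _).trans_le (Nat.mul_le_mul_left _ Finset.card_le_two)
  calc (edgeFinset D).card
      ≤ _ := Finset.card_le_card fun b hb => edgesOf_subset D (mem_edgeFinset.mp hb)
    _ ≤ _ := Finset.card_union_le _ _
    _ ≤ _ := add_le_add (Finset.card_image_le.trans hdirs) (Finset.card_image_le.trans hdirs)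
    _ = 4 * D.card := by ring

lemma glEnergy_eq_sum (V : ℝ → ℝ) (φ : Z2 → ℝ) (h : ↥D → ℝ) :
    glEnergy V D φ h = ∑ b ∈ edgeFinset D, V (grad (vee D h φ) b) :=
  finsum_mem_eq_finite_toFinset_sum _ (finite_edgesOf D)

lemma adjZ_of_edge {b : Z2 × Z2} (hdir : b.2 = b.1 + ((1, 0) : Z2) ∨ b.2 = b.1 + ((0, 1) : Z2)) :
    adjZ b.1 b.2 := by
  rcases hdir with hb | hb <;> simp [adjZ, hb]

lemma adjZ_comm {x y : Z2} : adjZ x y ↔ adjZ y x := by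
  rw [adjZ, adjZ, sub_sq_comm x.1, sub_sq_comm x.2]

lemma mem_or_mem_bdry_of_mem_edgeFinset {b : Z2 × Z2} (hb : b ∈ edgeFinset D) :
    (b.1 ∈ D ∨ b.1 ∈ bdry (D : Set Z2)) ∧ (b.2 ∈ D ∨ b.2 ∈ bdry (D : Set Z2)) := by
  obtain ⟨hdir, hD⟩ := mem_edgeFinset.mp hb
  have hadj := adjZ_of_edge hdir
  refine ⟨or_iff_not_imp_left.mpr fun h1 => ⟨h1, b.2, hD.resolve_left h1, hadj⟩,
    or_iff_not_imp_left.mpr fun h2 => ⟨h2, b.1, hD.resolve_right h2, adjZ_comm.mp hadj⟩⟩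

lemma exists_nat_add_notMem (D : Finset Z2) :
    ∃ N : ℕ, ∀ x ∈ D, x + (((N : ℤ), 0) : Z2) ∉ D := by
  obtain ⟨m, hm⟩ := (D.image fun x => x.1.natAbs).bddAbove
  have hle : ∀ x ∈ D, x.1.natAbs ≤ m := fun x hx => hm (Finset.mem_image_of_mem _ hx)
  refine ⟨2 * m + 1, fun x hx hx' => ?_⟩
  have hfst := hle x hx
  have hfst' := hle _ hx'
  rw [Prod.fst_add] at hfst'
  push_cast at hfst'
  omega

/-- Telescope along the horizontal ray from `x`, which leaves `D`. -/
lemma exists_sq_le_mul_sum_grad_sq (D : Finset Z2) :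
    ∃ C : ℝ, 0 < C ∧ ∀ f : Z2 → ℝ, (∀ x ∉ D, f x = 0) →
      ∀ x, f x ^ 2 ≤ C * ∑ b ∈ edgeFinset D, grad f b ^ 2 := by
  obtain ⟨N, hN⟩ := exists_nat_add_notMem D
  refine ⟨(N : ℝ) ^ 2 + 1, by positivity, fun f hf x => ?_⟩
  set S := ∑ b ∈ edgeFinset D, grad f b ^ 2
  have hS : 0 ≤ S := Finset.sum_nonneg fun b _ => sq_nonneg _
  by_cases hx : x ∈ D
  swap
  · rw [hf x hx, zero_pow two_ne_zero]
    positivity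
  have hstep : ∀ y : Z2, (f (y + ((1, 0) : Z2)) - f y) ^ 2 ≤ S := fun y => by
    by_cases hy : y ∈ D ∨ y + ((1, 0) : Z2) ∈ D
    · exact Finset.single_le_sum (f := fun b => grad f b ^ 2) (fun b _ => sq_nonneg _)
        (mem_edgeFinset.mpr ⟨.inl rfl, hy⟩ : (y, y + ((1, 0) : Z2)) ∈ edgeFinset D)
    · rw [not_or] at hy
      simpa [hf _ hy.1, hf _ hy.2] using hS
  have htelescope : ∑ k ∈ Finset.range N,
      (f (x + (((k : ℤ), 0) : Z2) + ((1, 0) : Z2)) - f (x + (((k : ℤ), 0) : Z2))) = -f x := by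
    have hsum := Finset.sum_range_sub (fun k : ℕ => f (x + (((k : ℤ), 0) : Z2))) N
    simpa [hf _ (hN x hx), add_assoc, Prod.mk_zero_zero] using hsum
  calc f x ^ 2 = (-f x) ^ 2 := (neg_sq _).symm
    _ ≤ (Finset.range N).card * ∑ k ∈ Finset.range N, _ := by
      rw [← htelescope]
      exact sq_sum_le_card_mul_sum_sq
    _ ≤ N * ∑ _k ∈ Finset.range N, S := by
      rw [Finset.card_range]
      exact mul_le_mul_of_nonneg_left (Finset.sum_le_sum fun k _ => hstep _) N.cast_nonneg
    _ = (N : ℝ) ^ 2 * S := by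
      rw [Finset.sum_const, Finset.card_range, nsmul_eq_mul]
      ring
    _ ≤ ((N : ℝ) ^ 2 + 1) * S := by gcongr; exact le_add_of_nonneg_right zero_le_one

lemma vee_of_mem (h : ↥D → ℝ) (φ : Z2 → ℝ) {x : Z2} (hx : x ∈ D) : vee D h φ x = h ⟨x, hx⟩ :=
  dif_pos hx

lemma vee_of_notMem (h : ↥D → ℝ) (φ : Z2 → ℝ) {x : Z2} (hx : x ∉ D) : vee D h φ x = φ x :=
  dif_neg hx

lemma vee_add (h g : ↥D → ℝ) (φ ψ : Z2 → ℝ) : vee D (h + g) (φ + ψ) = vee D h φ + vee D g ψ := by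
  funext x
  by_cases hx : x ∈ D <;> simp [vee, hx]

lemma vee_sub (h g : ↥D → ℝ) (φ ψ : Z2 → ℝ) : vee D (h - g) (φ - ψ) = vee D h φ - vee D g ψ := by
  funext x
  by_cases hx : x ∈ D <;> simp [vee, hx]

lemma vee_single_zero (i : ↥D) (ξ : ℝ) : vee D (Pi.single i ξ) 0 = Pi.single (i : Z2) ξ := by
  funext x
  by_cases hx : x ∈ D
  · simp [vee, hx, Pi.single_apply, Subtype.ext_iff]
  · simp [vee, hx, (ne_of_mem_of_not_mem i.2 hx).symm]

lemma grad_add (f g : Z2 → ℝ) (b : Z2 × Z2) : grad (f + g) b = grad f b + grad g b :=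
  add_sub_add_comm _ _ _ _

lemma grad_sub (f g : Z2 → ℝ) (b : Z2 × Z2) : grad (f - g) b = grad f b - grad g b :=
  sub_sub_sub_comm _ _ _ _

lemma grad_single (x : Z2) (ξ : ℝ) (b : Z2 × Z2) :
    grad (Pi.single x ξ) b = ξ * grad (Pi.single x 1) b := by
  simp only [grad, Pi.single_apply]
  split_ifs <;> ring

lemma abs_grad_single_one_le (x : Z2) (b : Z2 × Z2) : |grad (Pi.single x 1) b| ≤ 1 := by
  simp only [grad, Pi.single_apply]
  split_ifs <;> simp

lemma sum_mul_grad_single (ζ : ↥D → ℝ) (b : Z2 × Z2) :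
    ∑ i : ↥D, ζ i * grad (Pi.single (i : Z2) 1) b = grad (vee D ζ 0) b := by
  have hvee : ∀ x, ∑ i : ↥D, ζ i * (Pi.single (i : Z2) 1 : Z2 → ℝ) x = vee D ζ 0 x := fun x => by
    by_cases hx : x ∈ D
    · rw [vee_of_mem _ _ hx, Finset.sum_eq_single ⟨x, hx⟩] <;>
        simp +contextual [Subtype.ext_iff, eq_comm]
    · rw [vee_of_notMem _ _ hx]
      exact Finset.sum_eq_zero fun i _ => by
        simp [(ne_of_mem_of_not_mem i.2 hx).symm]
  simp only [grad, mul_sub, Finset.sum_sub_distrib, hvee]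

lemma continuous_grad_vee (φ : Z2 → ℝ) (b : Z2 × Z2) :
    Continuous fun h : ↥D → ℝ => grad (vee D h φ) b := by
  have hvee : ∀ x, Continuous fun h : ↥D → ℝ => vee D h φ x := fun x => by
    by_cases hx : x ∈ D
    · simpa only [vee_of_mem _ _ hx] using continuous_apply _
    · simpa only [vee_of_notMem _ _ hx] using continuous_const
  exact (hvee b.2).sub (hvee b.1)

lemma abs_grad_vee_le (h : ↥D → ℝ) (φ : Z2 → ℝ) (b : Z2 × Z2) :
    |grad (vee D h φ) b| ≤ |φ b.1| + |φ b.2| + 2 * ‖h‖ := by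
  have hvee : ∀ x, |vee D h φ x| ≤ |φ x| + ‖h‖ := fun x => by
    by_cases hx : x ∈ D
    · rw [vee_of_mem _ _ hx]
      exact (norm_le_pi_norm h _).trans (le_add_of_nonneg_left (abs_nonneg _))
    · rw [vee_of_notMem _ _ hx]
      exact le_add_of_nonneg_right (norm_nonneg h)
  have hsub : |grad (vee D h φ) b| ≤ |vee D h φ b.2| + |vee D h φ b.1| := abs_sub _ _
  linarith [hvee b.1, hvee b.2]

lemma exists_mul_sum_sq_le_sum_grad_vee_sq (D : Finset Z2) :
    ∃ κ : ℝ, 0 < κ ∧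
      ∀ h : ↥D → ℝ, κ * ∑ i, h i ^ 2 ≤ ∑ b ∈ edgeFinset D, grad (vee D h 0) b ^ 2 := by
  obtain ⟨C, hC, hpoincare⟩ := exists_sq_le_mul_sum_grad_sq D
  refine ⟨((Fintype.card ↥D + 1) * C)⁻¹, by positivity, fun h => ?_⟩
  rw [inv_mul_le_iff₀ (by positivity)]
  set S := ∑ b ∈ edgeFinset D, grad (vee D h 0) b ^ 2
  calc ∑ i, h i ^ 2 ≤ ∑ _i : ↥D, C * S := Finset.sum_le_sum fun i _ => by
        simpa only [vee_of_mem _ _ i.2] using hpoincare (vee D h 0) (fun x => vee_of_notMem h 0) i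
    _ = Fintype.card ↥D * (C * S) := by rw [Finset.sum_const, nsmul_eq_mul, Finset.card_univ]
    _ ≤ (Fintype.card ↥D + 1) * C * S := by
        rw [mul_assoc]
        gcongr
        exact le_add_of_nonneg_right zero_le_one

end Lattice

/-! ### The Ginzburg–Landau measure -/

section GibbsMoments

variable {ι : Type*} [Fintype ι]

lemma norm_sq_le_sum_sq (h : ι → ℝ) : ‖h‖ ^ 2 ≤ ∑ i, h i ^ 2 := by
  have hsum : 0 ≤ ∑ i, h i ^ 2 := Finset.sum_nonneg fun i _ => sq_nonneg _
  rw [← Real.le_sqrt (norm_nonneg h) hsum, pi_norm_le_iff_of_nonneg (Real.sqrt_nonneg _)]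
  exact fun i => Real.abs_le_sqrt
    (Finset.single_le_sum (f := fun i => h i ^ 2) (fun _ _ => sq_nonneg _) (Finset.mem_univ i))

lemma one_add_pow_le_exp_add_mul_sq {κ x : ℝ} (hκ : 0 < κ) (hx : 0 ≤ x) (n : ℕ) :
    (1 + x) ^ n ≤ rexp (n ^ 2 / (2 * κ) + κ / 2 * x ^ 2) := by
  have hsq : 0 ≤ (κ * x - n) ^ 2 / (2 * κ) := by positivity
  have hexpand : n ^ 2 / (2 * κ) + κ / 2 * x ^ 2 - n * x = (κ * x - n) ^ 2 / (2 * κ) := by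
    field_simp
    ring
  calc (1 + x) ^ n ≤ rexp x ^ n := by
        gcongr
        rw [add_comm]
        exact Real.add_one_le_exp x
    _ = rexp (n * x) := (Real.exp_nat_mul x n).symm
    _ ≤ _ := Real.exp_le_exp.mpr (by linarith)

lemma integrable_one_add_norm_pow_gibbs {H : (ι → ℝ) → ℝ} (hH : Measurable H) {κ C : ℝ}
    (hκ : 0 < κ) (hcoercive : ∀ h, κ * ∑ i, h i ^ 2 - C ≤ H h) (n : ℕ) :
    Integrable (fun h => (1 + ‖h‖) ^ n) (gibbs volume H) := by
  rw [gibbs, integrable_withDensity_iff (by fun_prop) (ae_of_all _ fun h => ENNReal.ofReal_lt_top)]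
  have hgauss : Integrable (fun h : ι → ℝ => ∏ i, rexp (-(κ / 2) * h i ^ 2)) :=
    Integrable.fintype_prod (f := fun (_ : ι) (t : ℝ) => rexp (-(κ / 2) * t ^ 2))
      fun _ => integrable_exp_neg_mul_sq (half_pos hκ)
  refine (hgauss.const_mul (rexp (n ^ 2 / (2 * κ) + C))).mono' (by fun_prop)
    (ae_of_all _ fun h => ?_)
  have hnorm := norm_sq_le_sum_sq h
  rw [ENNReal.toReal_ofReal (Real.exp_pos _).le, Real.norm_of_nonneg (by positivity),
    ← Real.exp_sum, ← Real.exp_add, ← Finset.mul_sum]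
  calc (1 + ‖h‖) ^ n * rexp (-H h)
      ≤ rexp (n ^ 2 / (2 * κ) + κ / 2 * ‖h‖ ^ 2) * rexp (-H h) := by
        gcongr
        exact one_add_pow_le_exp_add_mul_sq hκ (norm_nonneg h) n
    _ = rexp (n ^ 2 / (2 * κ) + κ / 2 * ‖h‖ ^ 2 - H h) := (Real.exp_add _ _).symm
    _ ≤ _ := Real.exp_le_exp.mpr (by nlinarith [hcoercive h])

end GibbsMoments

section GLMeasure

variable {V : ℝ → ℝ} {a A : ℝ} {D : Finset Z2}

/-- The derivative of the Hamiltonian `glEnergy V D φ` in the direction of the site `i`. -/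
def glGrad (V : ℝ → ℝ) (D : Finset Z2) (φ : Z2 → ℝ) (i : ↥D) (h : ↥D → ℝ) : ℝ :=
  ∑ b ∈ edgeFinset D, grad (Pi.single (i : Z2) 1) b * deriv V (grad (vee D h φ) b)

lemma measurable_glEnergy (hV : Continuous V) (φ : Z2 → ℝ) : Measurable (glEnergy V D φ) := by
  rw [funext (glEnergy_eq_sum V φ)]
  exact Finset.measurable_fun_sum _ fun b _ => (hV.comp (continuous_grad_vee φ b)).measurable

lemma measurable_glGrad (V : ℝ → ℝ) (φ : Z2 → ℝ) (i : ↥D) : Measurable (glGrad V D φ i) :=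
  Finset.measurable_fun_sum _ fun b _ =>
    ((measurable_deriv V).comp (continuous_grad_vee φ b).measurable).const_mul _

lemma abs_glEnergy_add_single_sub_le (hV : IsElliptic V a A) (φ : Z2 → ℝ) (i : ↥D) (h : ↥D → ℝ)
    (ξ : ℝ) : |glEnergy V D φ (h + Pi.single i ξ) - glEnergy V D φ h - ξ * glGrad V D φ i h|
      ≤ (edgeFinset D).card * A * ξ ^ 2 := by
  have hgrad : ∀ b, grad (vee D (h + Pi.single i ξ) φ) b
      = grad (vee D h φ) b + ξ * grad (Pi.single (i : Z2) 1) b := fun b => by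
    rw [← grad_single, ← grad_add, ← vee_single_zero, ← vee_add, add_zero]
  rw [glEnergy_eq_sum, glEnergy_eq_sum, glGrad, Finset.mul_sum, ← Finset.sum_sub_distrib,
    ← Finset.sum_sub_distrib]
  calc _ ≤ _ := Finset.abs_sum_le_sum_abs _ _
    _ ≤ ∑ b ∈ edgeFinset D, A * ξ ^ 2 := Finset.sum_le_sum fun b _ => by
      rw [hgrad, ← mul_assoc]
      refine (hV.abs_sub_sub_deriv_le _ _).trans (mul_le_mul_of_nonneg_left ?_ hV.pos_right.le)
      rw [mul_pow]
      exact mul_le_of_le_one_right (sq_nonneg ξ)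
        ((sq_le_one_iff_abs_le_one _).mpr (abs_grad_single_one_le _ b))
    _ = _ := by rw [Finset.sum_const, nsmul_eq_mul, mul_assoc]

lemma abs_glGrad_le (hV : IsElliptic V a A) (φ : Z2 → ℝ) (i : ↥D) (h : ↥D → ℝ) :
    |glGrad V D φ i h|
      ≤ (∑ b ∈ edgeFinset D, (|deriv V 0| + A * (2 + |φ b.1| + |φ b.2|))) * (1 + ‖h‖) := by
  have hA := hV.pos_right
  rw [glGrad, Finset.sum_mul]
  refine (Finset.abs_sum_le_sum_abs _ _).trans (Finset.sum_le_sum fun b _ => ?_)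
  rw [abs_mul]
  calc _ ≤ 1 * |deriv V (grad (vee D h φ) b)| := by
        gcongr
        exact abs_grad_single_one_le _ b
    _ ≤ |deriv V 0| + A * (|φ b.1| + |φ b.2| + 2 * ‖h‖) := by
        rw [one_mul]
        refine (hV.abs_deriv_le _).trans ?_
        gcongr
        exact abs_grad_vee_le h φ b
    _ ≤ _ := by
        have hnn : 0 ≤ (|deriv V 0| + A * (|φ b.1| + |φ b.2|)) * ‖h‖ := by positivity
        linarith

lemma hasQuadraticExpansion_glEnergy (hV : IsElliptic V a A) (φ : Z2 → ℝ) {B : ℝ}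
    (hB : ∑ b ∈ edgeFinset D, (|deriv V 0| + A * (2 + |φ b.1| + |φ b.2|)) ≤ B) :
    HasQuadraticExpansion (glEnergy V D φ) (glGrad V D φ) B where
  measurable := measurable_glEnergy hV.differentiable.continuous φ
  measurable_gradient := measurable_glGrad V φ
  abs_sub_le i h ξ := by
    have hA := hV.pos_right
    have hcard : (edgeFinset D).card * A ≤ B := by
      rw [← nsmul_eq_mul, ← Finset.sum_const]
      refine (Finset.sum_le_sum fun b _ => ?_).trans hB
      nlinarith [abs_nonneg (deriv V 0), mul_nonneg hA.le (abs_nonneg (φ b.1)),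
        mul_nonneg hA.le (abs_nonneg (φ b.2))]
    calc _ ≤ (edgeFinset D).card * A * ξ ^ 2 := by
          convert abs_glEnergy_add_single_sub_le hV φ i h ξ
      _ ≤ B * ξ ^ 2 := by gcongr
  abs_gradient_le i h := (abs_glGrad_le hV φ i h).trans
    (mul_le_mul_of_nonneg_right hB (by positivity))

lemma exists_sum_sq_sub_le_glEnergy (hV : IsElliptic V a A) (D : Finset Z2) (φ : Z2 → ℝ) :
    ∃ κ C : ℝ, 0 < κ ∧ ∀ h, κ * ∑ i, h i ^ 2 - C ≤ glEnergy V D φ h := by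
  have ha := hV.pos
  obtain ⟨κ, hκ, hpoincare⟩ := exists_mul_sum_sq_le_sum_grad_vee_sq D
  refine ⟨a / 4 * κ, ∑ b ∈ edgeFinset D,
    (deriv V (grad (vee D 0 φ) b) ^ 2 / a - V (grad (vee D 0 φ) b)), by positivity, fun h => ?_⟩
  have hsplit : vee D h φ = vee D 0 φ + vee D h 0 := by rw [← vee_add, zero_add, add_zero]
  calc _ ≤ a / 4 * ∑ b ∈ edgeFinset D, grad (vee D h 0) b ^ 2 - _ := by
        rw [mul_assoc]
        exact sub_le_sub_right (mul_le_mul_of_nonneg_left (hpoincare h) (by positivity)) _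
    _ ≤ glEnergy V D φ h := by
        rw [glEnergy_eq_sum, Finset.mul_sum, ← Finset.sum_sub_distrib]
        refine Finset.sum_le_sum fun b _ => ?_
        rw [hsplit, grad_add]
        exact hV.div_four_mul_sq_sub_le _ _

variable {φ : Z2 → ℝ} {P : Measure (↥D → ℝ)}

lemma IsGL.exists_eq_gibbs (hP : IsGL V D φ P) :
    ∃ c : ℝ≥0∞, P = gibbs (c • volume) (glEnergy V D φ) := by
  obtain ⟨-, c, -, -, rfl⟩ := hP
  exact ⟨c, (withDensity_smul_measure _ _).symm⟩

lemma IsGL.integrable_one_add_norm_pow (hP : IsGL V D φ P) (hV : IsElliptic V a A) (n : ℕ) :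
    Integrable (fun h => (1 + ‖h‖) ^ n) P := by
  obtain ⟨-, c, -, hc, rfl⟩ := hP
  obtain ⟨κ, C, hκ, hcoercive⟩ := exists_sum_sq_sub_le_glEnergy hV D φ
  exact (integrable_one_add_norm_pow_gibbs (measurable_glEnergy hV.differentiable.continuous φ)
    hκ hcoercive n).smul_measure hc

end GLMeasure

/-! ### The Caccioppoli inequality -/

section Overshoot

/-- The part of `s` outside `[-M, M]`: `s - M` above `M`, `s + M` below `-M`, and `0` between. -/
def overshoot (M s : ℝ) : ℝ := s - max (-M) (min s M)

variable {M : ℝ}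

lemma overshoot_cases (hM : 0 ≤ M) (s : ℝ) :
    (s ≤ -M ∧ overshoot M s = s + M) ∨ (-M ≤ s ∧ s ≤ M ∧ overshoot M s = 0) ∨
      (M ≤ s ∧ overshoot M s = s - M) := by
  grind [overshoot]

lemma measurable_overshoot (M : ℝ) : Measurable (overshoot M) :=
  measurable_id.sub (measurable_const.max (measurable_id.min measurable_const))

lemma overshoot_of_abs_le {s : ℝ} (hs : |s| ≤ M) : overshoot M s = 0 := by
  rw [overshoot, min_eq_left (abs_le.mp hs).2, max_eq_right (abs_le.mp hs).1, sub_self]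

lemma sq_overshoot_sub_le (hM : 0 ≤ M) (s t : ℝ) :
    (overshoot M s - overshoot M t) ^ 2 ≤ (overshoot M s - overshoot M t) * (s - t) := by
  rcases overshoot_cases hM s with ⟨hs, es⟩ | ⟨hs, hs', es⟩ | ⟨hs, es⟩ <;>
  rcases overshoot_cases hM t with ⟨ht, et⟩ | ⟨ht, ht', et⟩ | ⟨ht, et⟩ <;>
  rw [es, et] <;> nlinarith

lemma sq_overshoot_add_le (hM : 0 ≤ M) (s ξ : ℝ) :
    overshoot M (s + ξ) ^ 2 ≤ (overshoot M s + ξ) ^ 2 := by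
  rcases overshoot_cases hM s with ⟨_, es⟩ | ⟨hs, hs', es⟩ | ⟨_, es⟩ <;>
  rcases overshoot_cases hM (s + ξ) with ⟨ht, et⟩ | ⟨_, _, et⟩ | ⟨ht, et⟩ <;>
  rw [es, et] <;> nlinarith

lemma sq_le_add_sq_overshoot (hM : 0 ≤ M) (s : ℝ) :
    s ^ 2 ≤ 2 * M ^ 2 + 2 * overshoot M s ^ 2 := by
  rcases overshoot_cases hM s with ⟨_, es⟩ | ⟨hs, hs', es⟩ | ⟨_, es⟩ <;> rw [es] <;>
  nlinarith [sq_nonneg (s + 2 * M), sq_nonneg (s - 2 * M)]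

lemma isSemiconcaveCost_sq_add_sq_overshoot (hM : 0 ≤ M) {w Λ : ℝ} (hw : 0 ≤ w) (hw1 : w ≤ 1)
    (hΛ : 0 ≤ Λ) : IsSemiconcaveCost (fun s => (w * s ^ 2 + Λ * overshoot M s ^ 2) / 2)
      (fun s => w * s + Λ * overshoot M s) (1 + Λ) where
  measurable := by have := measurable_overshoot M; fun_prop
  measurable_deriv := by have := measurable_overshoot M; fun_prop
  nonneg s := by positivity
  zero := by simp [overshoot_of_abs_le (abs_zero.trans_le hM)]
  add_le s ξ := by
    have hovershoot := mul_le_mul_of_nonneg_left (sq_overshoot_add_le hM s ξ) hΛ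
    have hweight := mul_le_mul_of_nonneg_right hw1 (sq_nonneg ξ)
    have hΛξ := mul_nonneg hΛ (sq_nonneg ξ)
    linarith [sq_nonneg ξ]

end Overshoot

section EdgeInequality

variable {M a A k ℓ p q s t : ℝ}

/-- Expand around the midpoint `(s + t) / 2` and absorb the cross term by Young's inequality. -/
lemma cutoff_edge_inequality (ha : 0 < a) (hak : a ≤ k) (hkA : k ≤ A) (hpq : |q - p| ≤ ℓ) :
    a / 2 * ((p ^ 2 + q ^ 2) / 2 * (t - s) ^ 2) - A ^ 2 / a * ℓ ^ 2 * (s ^ 2 + t ^ 2)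
      ≤ (q ^ 2 * t - p ^ 2 * s) * (k * (t - s)) := by
  have hk : 0 < k := ha.trans_le hak
  have hexpand : (q ^ 2 * t - p ^ 2 * s) * (k * (t - s)) = k * ((p ^ 2 + q ^ 2) / 2 * (t - s) ^ 2)
      + k * ((t - s) * (p + q)) * ((s + t) / 2 * (q - p)) := by ring
  have hmain : a * ((p ^ 2 + q ^ 2) / 2 * (t - s) ^ 2)
      ≤ k * ((p ^ 2 + q ^ 2) / 2 * (t - s) ^ 2) :=
    mul_le_mul_of_nonneg_right hak (by positivity)
  have hyoung : -(k * ((t - s) * (p + q)) * ((s + t) / 2 * (q - p)))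
      ≤ a / 8 * ((t - s) * (p + q)) ^ 2 + k ^ 2 / (2 * a) * ((s + t) * (q - p)) ^ 2 := by
    have hsq : a / 8 * ((t - s) * (p + q)) ^ 2 + k ^ 2 / (2 * a) * ((s + t) * (q - p)) ^ 2
        + k * ((t - s) * (p + q)) * ((s + t) / 2 * (q - p))
        = (a * ((t - s) * (p + q)) + 2 * k * ((s + t) * (q - p))) ^ 2 / (8 * a) := by
      field_simp
      ring
    have hsq_nonneg :
        0 ≤ (a * ((t - s) * (p + q)) + 2 * k * ((s + t) * (q - p))) ^ 2 / (8 * a) := by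
      positivity
    linarith
  have hweight : a / 8 * ((t - s) * (p + q)) ^ 2 ≤ a / 2 * ((p ^ 2 + q ^ 2) / 2 * (t - s) ^ 2) := by
    have hpq_sq := mul_nonneg (mul_nonneg ha.le (sq_nonneg (p - q))) (sq_nonneg (t - s))
    linarith
  have herror : k ^ 2 / (2 * a) * ((s + t) * (q - p)) ^ 2
      ≤ A ^ 2 / a * ℓ ^ 2 * (s ^ 2 + t ^ 2) := by
    calc k ^ 2 / (2 * a) * ((s + t) * (q - p)) ^ 2
        = k ^ 2 / (2 * a) * (|q - p| ^ 2 * (s + t) ^ 2) := by rw [sq_abs]; ring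
      _ ≤ A ^ 2 / (2 * a) * (ℓ ^ 2 * (2 * (s ^ 2 + t ^ 2))) := by
        gcongr
        exact add_sq_le
      _ = A ^ 2 / a * ℓ ^ 2 * (s ^ 2 + t ^ 2) := by ring
  rw [hexpand]
  linarith

lemma overshoot_edge_inequality (hM : 0 ≤ M) (hk : 0 ≤ k) (hak : a ≤ k) :
    a * (overshoot M t - overshoot M s) ^ 2
      ≤ (overshoot M t - overshoot M s) * (k * (t - s)) := by
  calc _ ≤ k * (overshoot M t - overshoot M s) ^ 2 := by gcongr
    _ ≤ k * ((overshoot M t - overshoot M s) * (t - s)) := by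
        gcongr
        exact sq_overshoot_sub_le hM t s
    _ = _ := by ring

lemma caccioppoli_edge_inequality {Λ : ℝ} (hM : 0 ≤ M) (ha : 0 < a) (hak : a ≤ k) (hkA : k ≤ A)
    (hpq : |q - p| ≤ ℓ) (hΛ : 0 ≤ Λ) :
    a / 2 * ((p ^ 2 + q ^ 2) / 2 * (t - s) ^ 2) + Λ * a * (overshoot M t - overshoot M s) ^ 2
        - 2 * A ^ 2 / a * ℓ ^ 2 * (2 * M ^ 2 + (overshoot M s ^ 2 + overshoot M t ^ 2))
      ≤ ((q ^ 2 * t + Λ * overshoot M t) - (p ^ 2 * s + Λ * overshoot M s)) * (k * (t - s)) := by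
  have hcutoff := cutoff_edge_inequality (s := s) (t := t) ha hak hkA hpq
  have hovershoot := mul_le_mul_of_nonneg_left
    (overshoot_edge_inequality (s := s) (t := t) hM (ha.le.trans hak) hak) hΛ
  have hsize : A ^ 2 / a * ℓ ^ 2 * (s ^ 2 + t ^ 2)
      ≤ A ^ 2 / a * ℓ ^ 2 * (4 * M ^ 2 + 2 * (overshoot M s ^ 2 + overshoot M t ^ 2)) :=
    mul_le_mul_of_nonneg_left
      (by linarith [sq_le_add_sq_overshoot hM s, sq_le_add_sq_overshoot hM t]) (by positivity)
  linear_combination hcutoff + hovershoot + hsize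

end EdgeInequality

section Caccioppoli

variable {V : ℝ → ℝ} {a A M ℓ Λ : ℝ} {D : Finset Z2} {ψ ψt η : Z2 → ℝ}

lemma sum_mul_glGrad (ζ : ↥D → ℝ) (φ : Z2 → ℝ) (h : ↥D → ℝ) :
    ∑ i, ζ i * glGrad V D φ i h
      = ∑ b ∈ edgeFinset D, grad (vee D ζ 0) b * deriv V (grad (vee D h φ) b) := by
  simp only [glGrad, Finset.mul_sum, ← sum_mul_grad_single, Finset.sum_mul, mul_assoc]
  exact Finset.sum_comm

lemma vee_overshoot_sub (hψ : ∀ x ∈ bdry (D : Set Z2), |ψ x - ψt x| ≤ M) (h ht : ↥D → ℝ) {x : Z2}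
    (hx : x ∈ D ∨ x ∈ bdry (D : Set Z2)) :
    vee D (fun i => overshoot M (h i - ht i)) 0 x = overshoot M (vee D h ψ x - vee D ht ψt x) := by
  rcases hx with hx | hx
  · simp only [vee_of_mem _ _ hx]
  · simp only [vee_of_notMem _ _ hx.1, overshoot_of_abs_le (hψ x hx), Pi.zero_apply]

lemma vee_sq_mul_add_overshoot_sub (hη : ∀ x ∈ bdry (D : Set Z2), η x = 0)
    (hψ : ∀ x ∈ bdry (D : Set Z2), |ψ x - ψt x| ≤ M) (h ht : ↥D → ℝ) {x : Z2}
    (hx : x ∈ D ∨ x ∈ bdry (D : Set Z2)) :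
    vee D (fun i => η i ^ 2 * (h i - ht i) + Λ * overshoot M (h i - ht i)) 0 x
      = η x ^ 2 * (vee D h ψ x - vee D ht ψt x)
        + Λ * overshoot M (vee D h ψ x - vee D ht ψt x) := by
  rcases hx with hx | hx
  · simp only [vee_of_mem _ _ hx]
  · simp only [vee_of_notMem _ _ hx.1, overshoot_of_abs_le (hψ x hx), hη x hx, Pi.zero_apply]
    ring

lemma exists_sum_endpoints_sq_le (D : Finset Z2) :
    ∃ C : ℝ, 0 ≤ C ∧ ∀ f : Z2 → ℝ, (∀ x ∉ D, f x = 0) →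
      ∑ b ∈ edgeFinset D, (f b.1 ^ 2 + f b.2 ^ 2) ≤ C * ∑ b ∈ edgeFinset D, grad f b ^ 2 := by
  obtain ⟨C, hC, hpoincare⟩ := exists_sq_le_mul_sum_grad_sq D
  refine ⟨(edgeFinset D).card * (C + C), by positivity, fun f hf => ?_⟩
  calc ∑ b ∈ edgeFinset D, (f b.1 ^ 2 + f b.2 ^ 2)
      ≤ ∑ b ∈ edgeFinset D, _ :=
        Finset.sum_le_sum fun b _ => add_le_add (hpoincare f hf b.1) (hpoincare f hf b.2)
    _ = _ := by rw [Finset.sum_const, nsmul_eq_mul]; ring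

lemma caccioppoli_mem_edgeFinset (hV : IsElliptic V a A) (hM : 0 ≤ M) (hΛ : 0 ≤ Λ)
    (hψ : ∀ x ∈ bdry (D : Set Z2), |ψ x - ψt x| ≤ M) (hη : ∀ x ∈ bdry (D : Set Z2), η x = 0)
    (h ht : ↥D → ℝ) {b : Z2 × Z2} (hb : b ∈ edgeFinset D) (hℓ : |grad η b| ≤ ℓ) :
    a / 2 * ((η b.1 ^ 2 + η b.2 ^ 2) / 2 * grad (fun z => vee D h ψ z - vee D ht ψt z) b ^ 2)
        + Λ * a * grad (vee D (fun i => overshoot M (h i - ht i)) 0) b ^ 2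
        - 2 * A ^ 2 / a * ℓ ^ 2 * (2 * M ^ 2
          + (vee D (fun i => overshoot M (h i - ht i)) 0 b.1 ^ 2
            + vee D (fun i => overshoot M (h i - ht i)) 0 b.2 ^ 2))
      ≤ grad (vee D (fun i => η i ^ 2 * (h i - ht i) + Λ * overshoot M (h i - ht i)) 0) b *
          (deriv V (grad (vee D h ψ) b) - deriv V (grad (vee D ht ψt) b)) := by
  obtain ⟨hb1, hb2⟩ := mem_or_mem_bdry_of_mem_edgeFinset hb
  obtain ⟨k, ⟨hak, hkA⟩, hk⟩ := hV.exists_slope (grad (vee D ht ψt) b) (grad (vee D h ψ) b)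
  rw [hk, ← grad_sub]
  simp only [grad, Pi.sub_apply, vee_sq_mul_add_overshoot_sub hη hψ _ _ hb1,
    vee_sq_mul_add_overshoot_sub hη hψ _ _ hb2, vee_overshoot_sub hψ _ _ hb1,
    vee_overshoot_sub hψ _ _ hb2]
  exact caccioppoli_edge_inequality hM hV.pos hak hkA hℓ hΛ

lemma sum_siteDrift_glGrad (θ' : ↥D → ℝ → ℝ) (ψ ψt : Z2 → ℝ) (ω : (↥D → ℝ) × (↥D → ℝ)) :
    ∑ i, siteDrift θ' (glGrad V D ψ) (glGrad V D ψt) i ω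
      = ∑ b ∈ edgeFinset D, grad (vee D (fun i => θ' i (ω.1 i - ω.2 i)) 0) b *
          (deriv V (grad (vee D ω.1 ψ) b) - deriv V (grad (vee D ω.2 ψt) b)) := by
  simp only [siteDrift, mul_sub, Finset.sum_sub_distrib, ← sum_mul_glGrad]

/-- The factor of the overshoot is so large that the Poincaré inequality, with constant `C`, absorbs
the error terms of the edges on which the difference is large. -/
lemma sum_cutoff_grad_sq_le_sum_siteDrift (hV : IsElliptic V a A) (hM : 0 ≤ M)
    (hψ : ∀ x ∈ bdry (D : Set Z2), |ψ x - ψt x| ≤ M) (hη : ∀ x ∈ bdry (D : Set Z2), η x = 0)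
    (hℓ : ∀ b ∈ edgeFinset D, |grad η b| ≤ ℓ) {C : ℝ} (hC : 0 ≤ C)
    (hpoincare : ∀ f : Z2 → ℝ, (∀ x ∉ D, f x = 0) →
      ∑ b ∈ edgeFinset D, (f b.1 ^ 2 + f b.2 ^ 2) ≤ C * ∑ b ∈ edgeFinset D, grad f b ^ 2)
    (ω : (↥D → ℝ) × (↥D → ℝ)) :
    a / 2 * ∑ b ∈ edgeFinset D, (η b.1 ^ 2 + η b.2 ^ 2) / 2 *
        grad (fun z => vee D ω.1 ψ z - vee D ω.2 ψt z) b ^ 2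
      - 4 * A ^ 2 / a * ℓ ^ 2 * M ^ 2 * (edgeFinset D).card
    ≤ ∑ i : ↥D, siteDrift
        (fun (i : ↥D) s => η i ^ 2 * s + 2 * A ^ 2 / a ^ 2 * ℓ ^ 2 * C * overshoot M s)
        (glGrad V D ψ) (glGrad V D ψt) i ω := by
  have ha := hV.pos
  rw [sum_siteDrift_glGrad]
  set Λ := 2 * A ^ 2 / a ^ 2 * ℓ ^ 2 * C with hΛ
  set F := vee D (fun i => overshoot M (ω.1 i - ω.2 i)) 0 with hF
  have habsorb : 2 * A ^ 2 / a * ℓ ^ 2 * ∑ b ∈ edgeFinset D, (F b.1 ^ 2 + F b.2 ^ 2)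
      ≤ Λ * a * ∑ b ∈ edgeFinset D, grad F b ^ 2 := by
    calc _ ≤ 2 * A ^ 2 / a * ℓ ^ 2 * (C * ∑ b ∈ edgeFinset D, grad F b ^ 2) := by
          gcongr
          exact hpoincare F fun x => vee_of_notMem _ _
      _ = _ := by rw [hΛ]; field_simp
  refine le_trans ?_ (Finset.sum_le_sum fun b hb =>
    caccioppoli_mem_edgeFinset hV hM (by positivity) hψ hη ω.1 ω.2 hb (hℓ b hb))
  simp only [Finset.sum_sub_distrib, Finset.sum_add_distrib, ← Finset.mul_sum, ← hF,
    Finset.sum_const, nsmul_eq_mul] at habsorb ⊢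
  rw [← sub_nonneg] at habsorb ⊢
  refine habsorb.trans_eq ?_
  ring

variable {P Pt : Measure (↥D → ℝ)} {μ : Measure ((↥D → ℝ) × (↥D → ℝ))}

lemma IsCoupling.integrable_grad_sub_sq (hμ : IsCoupling μ P Pt)
    (hP : Integrable (fun h => (1 + ‖h‖) ^ 2) P) (hPt : Integrable (fun h => (1 + ‖h‖) ^ 2) Pt)
    (ψ ψt : Z2 → ℝ) (b : Z2 × Z2) :
    Integrable (fun ω => grad (fun z => vee D ω.1 ψ z - vee D ω.2 ψt z) b ^ 2) μ := by
  have hvee : ∀ ω : (↥D → ℝ) × (↥D → ℝ), (fun z => vee D ω.1 ψ z - vee D ω.2 ψt z)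
      = vee D (ω.1 - ω.2) (ψ - ψt) := fun ω => (vee_sub _ _ _ _).symm
  simp only [hvee]
  set K := |(ψ - ψt) b.1| + |(ψ - ψt) b.2|
  refine ((hμ.integrable_one_add_norm_pow hP hPt).const_mul ((K + 4) ^ 2)).mono'
    (((continuous_grad_vee _ b).comp (continuous_fst.sub continuous_snd)).pow 2
      |>.aestronglyMeasurable) (ae_of_all _ fun ω => ?_)
  rw [Real.norm_of_nonneg (sq_nonneg _), ← mul_pow, ← sq_abs]
  have hK0 : 0 ≤ K * ‖ω‖ := by positivity
  have hsub : ‖ω.1 - ω.2‖ ≤ ‖ω‖ + ‖ω‖ :=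
    (norm_sub_le _ _).trans (add_le_add (norm_fst_le ω) (norm_snd_le ω))
  gcongr
  linarith [abs_grad_vee_le (ω.1 - ω.2) (ψ - ψt) b]

lemma exists_hasQuadraticExpansion_glEnergy (hV : IsElliptic V a A) (ψ ψt : Z2 → ℝ) :
    ∃ B, HasQuadraticExpansion (glEnergy V D ψ) (glGrad V D ψ) B ∧
      HasQuadraticExpansion (glEnergy V D ψt) (glGrad V D ψt) B :=
  ⟨_, hasQuadraticExpansion_glEnergy hV ψ (le_max_left _ _),
    hasQuadraticExpansion_glEnergy hV ψt (le_max_right _ _)⟩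

lemma exists_stationary_glCoupling (hV : IsElliptic V a A) (hP : IsGL V D ψ P)
    (hPt : IsGL V D ψt Pt) {θ θ' : ↥D → ℝ → ℝ} {K : ℝ}
    (hθ : ∀ i, IsSemiconcaveCost (θ i) (θ' i) K) {ρ : ℝ} (hρ : 0 < ρ) :
    ∃ μ, IsCoupling μ P Pt ∧
      (∀ i, Integrable (siteDrift θ' (glGrad V D ψ) (glGrad V D ψt) i) μ) ∧
      ∑ i, ∫ ω, siteDrift θ' (glGrad V D ψ) (glGrad V D ψt) i ω ∂μ ≤ ρ := by
  obtain ⟨B, hH, hHt⟩ := exists_hasQuadraticExpansion_glEnergy (D := D) hV ψ ψt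
  have hmoment := hP.integrable_one_add_norm_pow hV 3
  have hmoment_t := hPt.integrable_one_add_norm_pow hV 3
  have := hP.1
  have := hPt.1
  obtain ⟨c, rfl⟩ := hP.exists_eq_gibbs
  obtain ⟨ct, rfl⟩ := hPt.exists_eq_gibbs
  obtain ⟨μ, hμ, hle⟩ := exists_stationary_coupling hθ hH hHt hmoment hmoment_t hρ
  exact ⟨μ, hμ, integrable_siteDrift hθ hH hHt
    (hμ.integrable_one_add_norm_pow hmoment hmoment_t), hle⟩

theorem exists_caccioppoli_coupling (hV : IsElliptic V a A) (hM : 0 < M) (hℓ0 : 0 < ℓ)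
    (hψ : ∀ x ∈ bdry (D : Set Z2), |ψ x - ψt x| ≤ M) (hη : ∀ x ∈ bdry (D : Set Z2), η x = 0)
    (hη1 : ∀ x, |η x| ≤ 1) (hℓ : ∀ b ∈ edgeFinset D, |grad η b| ≤ ℓ)
    (hP : IsGL V D ψ P) (hPt : IsGL V D ψt Pt) :
    ∃ μ, IsCoupling μ P Pt ∧
      ∑ b ∈ edgeFinset D, (η b.1 ^ 2 + η b.2 ^ 2) / 2 *
          ∫ ω, grad (fun z => vee D ω.1 ψ z - vee D ω.2 ψt z) b ^ 2 ∂μ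
        ≤ 8 * (A / a) ^ 2 * ℓ ^ 2 * M ^ 2 * ((edgeFinset D).card + 1) := by
  have ha := hV.pos
  have hA := hV.pos_right
  obtain ⟨C, hC, hpoincare⟩ := exists_sum_endpoints_sq_le D
  obtain ⟨μ, hμ, hdrift, hle⟩ := exists_stationary_glCoupling hV hP hPt
    (fun i : ↥D => isSemiconcaveCost_sq_add_sq_overshoot hM.le (sq_nonneg (η i))
      ((sq_le_one_iff_abs_le_one _).mpr (hη1 i))
      (by positivity : 0 ≤ 2 * A ^ 2 / a ^ 2 * ℓ ^ 2 * C))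
    (by positivity : 0 < 4 * A ^ 2 / a * ℓ ^ 2 * M ^ 2)
  have := hμ.1
  have hgrad := hμ.integrable_grad_sub_sq (hP.integrable_one_add_norm_pow hV 2)
    (hPt.integrable_one_add_norm_pow hV 2) ψ ψt
  refine ⟨μ, hμ, ?_⟩
  have hsum := integrable_finsetSum (edgeFinset D) fun b _ =>
    (hgrad b).const_mul ((η b.1 ^ 2 + η b.2 ^ 2) / 2)
  have hmono := integral_mono ((hsum.const_mul (a / 2)).sub (integrable_const _))
    (integrable_finsetSum _ fun i _ => hdrift i)
    (sum_cutoff_grad_sq_le_sum_siteDrift hV hM.le hψ hη hℓ hC hpoincare)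
  rw [integral_finsetSum _ fun i _ => hdrift i, integral_sub' (hsum.const_mul _)
    (integrable_const _), integral_const, probReal_univ, one_smul, integral_const_mul,
    integral_finsetSum _ fun b _ => (hgrad b).const_mul _] at hmono
  simp only [integral_const_mul] at hmono
  refine le_of_mul_le_mul_left ?_ (half_pos ha)
  calc _ ≤ 4 * A ^ 2 / a * ℓ ^ 2 * M ^ 2 * (edgeFinset D).card + 4 * A ^ 2 / a * ℓ ^ 2 * M ^ 2 := by
        linarith
    _ = _ := by field_simp; ring

end Caccioppoli

/-! ### Cutoffs and annuli -/

section Geometry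

/-- The point of the complex plane with the coordinates of `x`; it turns `edist2` and `distToSet`
into the distance and the infimum distance of a metric space. -/
def toComplex (x : Z2) : ℂ := ⟨x.1, x.2⟩

lemma edist2_eq_dist (x y : Z2) : edist2 x y = dist (toComplex x) (toComplex y) := by
  rw [Complex.dist_eq_re_im]
  rfl

lemma distToSet_eq_infDist (x : Z2) (S : Set Z2) :
    distToSet x S = Metric.infDist (toComplex x) (toComplex '' S) := by
  rw [distToSet, Metric.infDist_eq_iInf, ← sInf_image', Set.image_image]
  simp only [edist2_eq_dist]

lemma distToSet_nonneg (x : Z2) (S : Set Z2) : 0 ≤ distToSet x S :=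
  (distToSet_eq_infDist x S).symm ▸ Metric.infDist_nonneg

lemma distToSet_of_mem {x : Z2} {S : Set Z2} (hx : x ∈ S) : distToSet x S = 0 := by
  rw [distToSet_eq_infDist, Metric.infDist_zero_of_mem (Set.mem_image_of_mem _ hx)]

lemma abs_distToSet_sub_le (x y : Z2) (S : Set Z2) :
    |distToSet x S - distToSet y S| ≤ edist2 x y := by
  rw [distToSet_eq_infDist, distToSet_eq_infDist, edist2_eq_dist, ← Real.dist_eq]
  exact (Metric.lipschitz_infDist_pt _).dist_le_mul_of_le le_rfl |>.trans_eq (one_mul _)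

lemma edist2_of_adjZ {x y : Z2} (hxy : adjZ x y) : edist2 x y = 1 := by
  have hsq : ((x.1 : ℝ) - y.1) ^ 2 + ((x.2 : ℝ) - y.2) ^ 2 = 1 := by exact_mod_cast hxy
  rw [edist2, hsq, Real.sqrt_one]

variable {D : Finset Z2}

lemma edist2_le_diamZ {x y : Z2} (hx : x ∈ D) (hy : y ∈ D) :
    edist2 x y ≤ diamZ (D : Set Z2) := by
  refine le_csSup (((D ×ˢ D).finite_toSet.image fun p => edist2 p.1 p.2).subset ?_).bddAbove
    ⟨x, hx, y, hy, rfl⟩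
  rintro _ ⟨x, hx, y, hy, rfl⟩
  exact ⟨(x, y), Finset.mem_product.mpr ⟨hx, hy⟩, rfl⟩

lemma mem_Icc_of_abs_sub_le {R : ℝ} {s t : ℤ} (h : |(s : ℝ) - t| ≤ R) :
    s ∈ Finset.Icc (t - ⌊R⌋) (t + ⌊R⌋) := by
  have hfloor : |s - t| ≤ ⌊R⌋ := Int.le_floor.mpr (by push_cast; exact h)
  rw [abs_le] at hfloor
  exact Finset.mem_Icc.mpr ⟨by linarith, by linarith⟩

lemma diamZ_nonneg (D : Set Z2) : 0 ≤ diamZ D :=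
  Real.sSup_nonneg (by rintro _ ⟨x, -, y, -, rfl⟩; exact Real.sqrt_nonneg _)

lemma card_le_diamZ (D : Finset Z2) : (D.card : ℝ) ≤ (2 * diamZ (D : Set Z2) + 1) ^ 2 := by
  set R := diamZ (D : Set Z2)
  rcases D.eq_empty_or_nonempty with rfl | ⟨x, hx⟩
  · simpa only [Finset.card_empty, Nat.cast_zero] using sq_nonneg _
  have hsub : D ⊆ Finset.Icc (x.1 - ⌊R⌋) (x.1 + ⌊R⌋) ×ˢ Finset.Icc (x.2 - ⌊R⌋) (x.2 + ⌊R⌋) := by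
    intro y hy
    have hdist := edist2_le_diamZ hy hx
    have hfst : |(y.1 : ℝ) - x.1| ≤ edist2 y x :=
      Real.abs_le_sqrt (le_add_of_nonneg_right (sq_nonneg _))
    have hsnd : |(y.2 : ℝ) - x.2| ≤ edist2 y x :=
      Real.abs_le_sqrt (le_add_of_nonneg_left (sq_nonneg _))
    exact Finset.mem_product.mpr
      ⟨mem_Icc_of_abs_sub_le (hfst.trans hdist), mem_Icc_of_abs_sub_le (hsnd.trans hdist)⟩
  have hside : ∀ t : ℤ, ((Finset.Icc (t - ⌊R⌋) (t + ⌊R⌋)).card : ℝ) ≤ 2 * R + 1 := fun t => by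
    have hR0 : 0 ≤ ⌊R⌋ := Int.floor_nonneg.mpr (diamZ_nonneg _)
    rw [Int.card_Icc, ← Int.cast_natCast, Int.toNat_of_nonneg (by linarith)]
    push_cast
    linarith [Int.floor_le R]
  calc (D.card : ℝ) ≤ _ := Nat.cast_le.mpr (Finset.card_le_card hsub)
    _ ≤ (2 * R + 1) * (2 * R + 1) := by
        rw [Finset.card_product, Nat.cast_mul]
        exact mul_le_mul (hside _) (hside _) (Nat.cast_nonneg _)
          ((Nat.cast_nonneg _).trans (hside 0))
    _ = _ := (sq _).symm

lemma card_edgeFinset_add_one_le (hD : 1 ≤ diamZ (D : Set Z2)) :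
    ((edgeFinset D).card : ℝ) + 1 ≤ 37 * diamZ (D : Set Z2) ^ 2 := by
  have hedges : ((edgeFinset D).card : ℝ) ≤ 4 * D.card := by exact_mod_cast card_edgeFinset_le D
  nlinarith [card_le_diamZ D]

/-- The cutoff `min (1, dist(·, ∂D) / r)`, which vanishes on `∂D` and equals one on `D(r)`. -/
def cutoff (D : Finset Z2) (r : ℝ) (x : Z2) : ℝ := min 1 (distToSet x (bdry (D : Set Z2)) / r)

variable {r : ℝ}

lemma cutoff_of_mem_bdry (r : ℝ) {x : Z2} (hx : x ∈ bdry (D : Set Z2)) : cutoff D r x = 0 := by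
  rw [cutoff, distToSet_of_mem hx, zero_div, min_eq_right zero_le_one]

lemma cutoff_of_mem_innerSet (hr : 0 < r) {x : Z2} (hx : x ∈ innerSet D r) : cutoff D r x = 1 :=
  min_eq_left ((one_le_div hr).mpr hx.2)

lemma abs_cutoff_le_one (D : Finset Z2) (hr : 0 ≤ r) (x : Z2) : |cutoff D r x| ≤ 1 := by
  rw [cutoff, abs_of_nonneg (le_min zero_le_one (div_nonneg (distToSet_nonneg _ _) hr))]
  exact min_le_left _ _

lemma abs_grad_cutoff_le (hr : 0 < r) {b : Z2 × Z2} (hb : b ∈ edgeFinset D) :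
    |grad (cutoff D r) b| ≤ 1 / r := by
  have hdist : edist2 b.2 b.1 = 1 :=
    edist2_of_adjZ (adjZ_comm.mp (adjZ_of_edge (mem_edgeFinset.mp hb).1))
  refine (abs_min_sub_min_le_max _ _ _ _).trans (max_le (by simpa using hr.le) ?_)
  rw [← sub_div, abs_div, abs_of_pos hr, ← hdist]
  exact div_le_div_of_nonneg_right (abs_distToSet_sub_le _ _ _) hr.le

end Geometry

section Annuli

variable {D : Finset Z2} {S T : Set Z2} {f : Z2 × Z2 → ℝ}

lemma intEdges_mono (hST : S ⊆ T) : intEdges S ⊆ intEdges T :=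
  fun _ hb => ⟨hb.1, hST hb.2.1, hST hb.2.2⟩

lemma disjoint_intEdges (hST : Disjoint S T) : Disjoint (intEdges S) (intEdges T) :=
  Set.disjoint_left.mpr fun _ hbS hbT => Set.disjoint_left.mp hST hbS.2.1 hbT.2.1

lemma annul_subset_innerSet (D : Finset Z2) {r R₁ : ℝ} (hr : r ≤ R₁) (R₂ : ℝ) :
    annul D R₁ R₂ ⊆ innerSet D r := fun _ hx => ⟨hx.1, hr.trans hx.2.1⟩

lemma innerSet_anti (D : Finset Z2) : Antitone (innerSet D) :=
  fun _ _ hr _ hx => ⟨hx.1, hr.trans hx.2⟩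

lemma pairwise_disjoint_annul (D : Finset Z2) {u : ℕ → ℝ} (hu : Monotone u) :
    Pairwise (Function.onFun Disjoint fun k => annul D (u k) (u (k + 1))) :=
  fun _ _ hjk => Set.disjoint_left.mpr fun _ hj hk =>
    Set.disjoint_left.mp (hu.pairwise_disjoint_on_Ico_succ hjk) hj.2 hk.2

lemma finsum_intEdges (hS : S ⊆ D) (f : Z2 × Z2 → ℝ) :
    ∑ᶠ b ∈ intEdges S, f b = ∑ b ∈ (edgeFinset D).filter (· ∈ intEdges S), f b := by
  refine finsum_mem_eq_sum_of_inter_support_eq f (congrArg (· ∩ _) (Set.ext fun b => ?_))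
  rw [Finset.coe_filter, Set.mem_ofPred_eq, mem_edgeFinset]
  exact ⟨fun hb => ⟨⟨hb.1, .inl (hS hb.2.1)⟩, hb⟩, And.right⟩

lemma finsum_intEdges_mono (hST : S ⊆ T) (hT : T ⊆ D) (hf : ∀ b, 0 ≤ f b) :
    ∑ᶠ b ∈ intEdges S, f b ≤ ∑ᶠ b ∈ intEdges T, f b := by
  rw [finsum_intEdges (hST.trans hT), finsum_intEdges hT]
  exact Finset.sum_le_sum_of_subset_of_nonneg
    (Finset.monotone_filter_right _ fun _ _ hb => intEdges_mono hST hb) fun b _ _ => hf b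

lemma exists_sum_le_sum_div_card {ι α : Type*} {I : Finset ι} (hI : I.Nonempty) {s : ι → Finset α}
    {t : Finset α} (hs : (I : Set ι).PairwiseDisjoint s) (hst : ∀ k ∈ I, s k ⊆ t) {f : α → ℝ}
    (hf : ∀ x, 0 ≤ f x) : ∃ k ∈ I, ∑ x ∈ s k, f x ≤ (∑ x ∈ t, f x) / I.card := by
  refine Finset.exists_le_of_sum_le hI ?_
  rw [← Finset.sum_biUnion hs, Finset.sum_const, nsmul_eq_mul,
    mul_div_cancel₀ _ (Nat.cast_ne_zero.mpr hI.card_ne_zero)]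
  exact Finset.sum_le_sum_of_subset_of_nonneg (Finset.biUnion_subset.mpr hst) fun x _ _ => hf x

lemma exists_finsum_annul_le (D : Finset Z2) (hf : ∀ b, 0 ≤ f b) {u : ℕ → ℝ} (hu : Monotone u)
    {n : ℕ} (hn : n ≠ 0) : ∃ k < n, ∑ᶠ b ∈ intEdges (annul D (u k) (u (k + 1))), f b
      ≤ (∑ᶠ b ∈ intEdges (innerSet D (u 0)), f b) / n := by
  obtain ⟨k, hk, hle⟩ := exists_sum_le_sum_div_card (I := Finset.range n)
    (s := fun k => (edgeFinset D).filter (· ∈ intEdges (annul D (u k) (u (k + 1)))))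
    (t := (edgeFinset D).filter (· ∈ intEdges (innerSet D (u 0))))
    (Finset.nonempty_range_iff.mpr hn)
    (fun j _ k _ hjk => Finset.disjoint_filter.mpr fun _ _ hj => Set.disjoint_left.mp
      (disjoint_intEdges (pairwise_disjoint_annul D hu hjk)) hj)
    (fun k _ => Finset.monotone_filter_right _ fun _ _ hb =>
      intEdges_mono (annul_subset_innerSet D (hu k.zero_le) _) hb) hf
  refine ⟨k, Finset.mem_range.mp hk, ?_⟩
  rwa [Finset.card_range, ← finsum_intEdges fun _ hx => hx.1, ← finsum_intEdges fun _ hx => hx.1]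
    at hle

lemma exists_finsum_annul_rpow_le (D : Finset Z2) (hf : ∀ b, 0 ≤ f b) {R : ℝ} (hR : 0 < R)
    (ε : ℝ) : ∃ R₁ ∈ Set.Icc (R ^ (1 - ε)) (2 * R ^ (1 - ε)),
      ∑ᶠ b ∈ intEdges (annul D R₁ (R₁ + R ^ (1 - 5 * ε))), f b
        ≤ (∑ᶠ b ∈ intEdges (innerSet D (R ^ (1 - ε))), f b) / R ^ (4 * ε) := by
  obtain ⟨k, hk, hle⟩ := exists_finsum_annul_le D hf (n := ⌊R ^ (4 * ε)⌋₊ + 1)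
    (u := fun k => R ^ (1 - ε) + k * R ^ (1 - 5 * ε))
    (fun j k hjk => by dsimp only; gcongr) (Nat.succ_ne_zero _)
  have hk : (k : ℝ) ≤ R ^ (4 * ε) :=
    (Nat.cast_le.mpr (Nat.lt_succ_iff.mp hk)).trans (Nat.floor_le (by positivity))
  have hkw : k * R ^ (1 - 5 * ε) ≤ R ^ (1 - ε) := by
    calc _ ≤ R ^ (4 * ε) * R ^ (1 - 5 * ε) := by gcongr
      _ = _ := by rw [← Real.rpow_add hR]; congr 1; ring
  refine ⟨R ^ (1 - ε) + k * R ^ (1 - 5 * ε),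
    ⟨le_add_of_nonneg_right (by positivity), by linarith⟩, ?_⟩
  push_cast at hle
  rw [add_one_mul, ← add_assoc, zero_mul, add_zero] at hle
  refine hle.trans (div_le_div_of_nonneg_left ?_ (by positivity) (Nat.lt_floor_add_one _).le)
  exact finsum_nonneg fun b => finsum_nonneg fun _ => hf b

end Annuli

section AnnulusEnergy

variable {V : ℝ → ℝ} {a A ε : ℝ}

lemma exists_coupling_finsum_innerSet_le (hV : IsElliptic V a A) {D : Finset Z2} {ψ ψt : Z2 → ℝ}
    {M r : ℝ} (hM : 0 < M) (hr : 0 < r) (hψ : ∀ x ∈ bdry (D : Set Z2), |ψ x - ψt x| ≤ M)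
    {P Pt : Measure (↥D → ℝ)} (hP : IsGL V D ψ P) (hPt : IsGL V D ψt Pt) :
    ∃ μ, IsCoupling μ P Pt ∧ ∑ᶠ b ∈ intEdges (innerSet D r),
        ∫ ω, grad (fun z => vee D ω.1 ψ z - vee D ω.2 ψt z) b ^ 2 ∂μ
      ≤ 8 * (A / a) ^ 2 * (1 / r) ^ 2 * M ^ 2 * ((edgeFinset D).card + 1) := by
  obtain ⟨μ, hμ, hle⟩ := exists_caccioppoli_coupling hV hM (one_div_pos.mpr hr) hψ
    (fun x => cutoff_of_mem_bdry r) (abs_cutoff_le_one D hr.le)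
    (fun b => abs_grad_cutoff_le hr) hP hPt
  refine ⟨μ, hμ, hle.trans' ?_⟩
  rw [finsum_intEdges fun x hx => hx.1, Finset.sum_filter]
  refine Finset.sum_le_sum fun b _ => ?_
  split_ifs with hb
  · rw [cutoff_of_mem_innerSet hr hb.2.1, cutoff_of_mem_innerSet hr hb.2.2]
    linarith
  · positivity

lemma exists_sq_log_rpow_le_mul_rpow {κ : ℝ} (hκ : 0 < κ) (hε : 0 < ε) :
    ∃ K > 0, ∀ R, 1 ≤ R → (Real.log R ^ κ) ^ 2 ≤ K * R ^ ε := by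
  set δ := ε / (2 * κ) with hδ
  have hδ0 : 0 < δ := by positivity
  refine ⟨(1 / δ) ^ (κ * 2), by positivity, fun R hR => ?_⟩
  have hR0 : 0 ≤ R := zero_le_one.trans hR
  have hlog := Real.log_nonneg hR
  calc (Real.log R ^ κ) ^ 2 = Real.log R ^ (κ * 2) := (Real.rpow_mul_natCast hlog κ 2).symm
    _ ≤ (1 / δ * R ^ δ) ^ (κ * 2) := by
        gcongr
        exact (Real.log_le_rpow_div hR0 hδ0).trans_eq (by ring)
    _ = (1 / δ) ^ (κ * 2) * R ^ ε := by
        rw [Real.mul_rpow (by positivity) (by positivity), ← Real.rpow_mul hR0, hδ]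
        congr 2
        field_simp

lemma one_div_rpow_sq_mul_sq {R : ℝ} (hR : 0 < R) (ε : ℝ) :
    (1 / R ^ (1 - ε)) ^ 2 * R ^ 2 = R ^ (2 * ε) := by
  rw [← mul_pow, one_div, ← Real.rpow_neg hR.le, ← Real.rpow_add_one hR.ne',
    ← Real.rpow_mul_natCast hR.le]
  congr 1
  push_cast
  ring

lemma exists_coupling_finsum_innerSet_rpow_le (hV : IsElliptic V a A) {C κ : ℝ} (hC : 0 < C)
    (hκ : 0 < κ) (hε : 0 < ε) : ∃ c : ℝ, 0 < c ∧ ∀ (D : Finset Z2) (ψ ψt : Z2 → ℝ),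
      1 < diamZ (D : Set Z2) →
      (∀ x ∈ bdry (D : Set Z2), |ψ x - ψt x| ≤ C * Real.log (diamZ (D : Set Z2)) ^ κ) →
      ∀ P Pt : Measure (↥D → ℝ), IsGL V D ψ P → IsGL V D ψt Pt →
      ∃ μ, IsCoupling μ P Pt ∧ ∑ᶠ b ∈ intEdges (innerSet D (diamZ (D : Set Z2) ^ (1 - ε))),
          ∫ ω, grad (fun z => vee D ω.1 ψ z - vee D ω.2 ψt z) b ^ 2 ∂μ
        ≤ c * diamZ (D : Set Z2) ^ (3 * ε) := by
  have ha := hV.pos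
  have hA := hV.pos_right
  obtain ⟨K, hK, hlog⟩ := exists_sq_log_rpow_le_mul_rpow hκ hε
  refine ⟨8 * 37 * (A / a) ^ 2 * C ^ 2 * K, by positivity, fun D ψ ψt hD hψ P Pt hP hPt => ?_⟩
  have hedges := card_edgeFinset_add_one_le hD.le
  set R := diamZ (D : Set Z2)
  have hR : 0 < R := zero_lt_one.trans hD
  have hlog_pos := Real.log_pos hD
  obtain ⟨μ, hμ, hle⟩ := exists_coupling_finsum_innerSet_le hV (by positivity)
    (Real.rpow_pos_of_pos hR (1 - ε)) hψ hP hPt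
  refine ⟨μ, hμ, hle.trans ?_⟩
  calc _ ≤ 8 * (A / a) ^ 2 * (1 / R ^ (1 - ε)) ^ 2 * (C * Real.log R ^ κ) ^ 2 * (37 * R ^ 2) := by
        gcongr
    _ = 8 * 37 * (A / a) ^ 2 * C ^ 2 * (Real.log R ^ κ) ^ 2
          * ((1 / R ^ (1 - ε)) ^ 2 * R ^ 2) := by ring
    _ ≤ 8 * 37 * (A / a) ^ 2 * C ^ 2 * (K * R ^ ε) * R ^ (2 * ε) := by
        rw [one_div_rpow_sq_mul_sq hR]
        gcongr
        exact hlog R hD.le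
    _ = 8 * 37 * (A / a) ^ 2 * C ^ 2 * K * (R ^ ε * R ^ (2 * ε)) := by ring
    _ = _ := by rw [← Real.rpow_add hR]; congr 2; ring

theorem annulus_dirichlet_energy_general (hV : IsElliptic V a A) {C κ : ℝ} (hC : 0 < C)
    (hκ : 0 < κ) (hε : 0 < ε) : ∃ c : ℝ, 0 < c ∧ ∀ (D : Finset Z2) (ψ ψt : Z2 → ℝ),
      1 < diamZ (D : Set Z2) →
      (∀ x ∈ bdry (D : Set Z2), |ψ x - ψt x| ≤ C * Real.log (diamZ (D : Set Z2)) ^ κ) →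
      ∀ P Pt : Measure (↥D → ℝ), IsGL V D ψ P → IsGL V D ψt Pt →
      ∃ R1 : ℝ,
        diamZ (D : Set Z2) ^ (1 - ε) ≤ R1 ∧ R1 ≤ 2 * diamZ (D : Set Z2) ^ (1 - ε) ∧
      ∃ μ : Measure ((↥D → ℝ) × (↥D → ℝ)),
        IsCoupling μ P Pt ∧
        (∑ᶠ b ∈ intEdges (annul D R1 (R1 + diamZ (D : Set Z2) ^ (1 - 5 * ε))),
            ∫ ω, (grad (fun z => vee D ω.1 ψ z - vee D ω.2 ψt z) b) ^ 2 ∂μ)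
          ≤ c * diamZ (D : Set Z2) ^ (-ε) ∧
        (∑ᶠ b ∈ intEdges (innerSet D R1),
            ∫ ω, (grad (fun z => vee D ω.1 ψ z - vee D ω.2 ψt z) b) ^ 2 ∂μ)
          ≤ c * diamZ (D : Set Z2) ^ (3 * ε) := by
  obtain ⟨c, hc, henergy⟩ := exists_coupling_finsum_innerSet_rpow_le hV hC hκ hε
  refine ⟨c, hc, fun D ψ ψt hD hψ P Pt hP hPt => ?_⟩
  obtain ⟨μ, hμ, hinner⟩ := henergy D ψ ψt hD hψ P Pt hP hPt
  have hnonneg : ∀ b, 0 ≤ ∫ ω, grad (fun z => vee D ω.1 ψ z - vee D ω.2 ψt z) b ^ 2 ∂μ :=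
    fun b => integral_nonneg fun ω => sq_nonneg _
  have hR : 0 < diamZ (D : Set Z2) := zero_lt_one.trans hD
  obtain ⟨R₁, ⟨hR₁, hR₁'⟩, hannul⟩ := exists_finsum_annul_rpow_le D hnonneg hR ε
  refine ⟨R₁, hR₁, hR₁', μ, hμ, ?_, ?_⟩
  · calc _ ≤ c * diamZ (D : Set Z2) ^ (3 * ε) / diamZ (D : Set Z2) ^ (4 * ε) :=
          hannul.trans (by gcongr)
      _ = _ := by rw [mul_div_assoc, ← Real.rpow_sub hR]; congr 2; ring
  · exact (finsum_intEdges_mono (innerSet_anti D hR₁) (fun x hx => hx.1) hnonneg).trans hinner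

end AnnulusEnergy

/-- Dirichlet energy of the coupled difference in an annulus.
For all `Λ̄ > 0`, `u ∈ ℝ²`, `ε > 0` there is `c = c(Λ̄, ε, V) > 0` such that for every finite
connected `D` of diameter `R ≥ 2` and tilted boundary conditions `ψ, ψ̃`, there exist
`R₁ ∈ [R^{1−ε}, 2R^{1−ε}]` and a coupling with, for `h̄ = h^ψ − h^ψ̃` and `R₂ = R₁ + R^{1−5ε}`:
`Σ_{b ⊆ {R₁ ≤ dist(·,∂D) < R₂}} E|∇h̄(b)|² ≤ c R^{−ε}` and
`Σ_{b ⊆ D(R₁)} E|∇h̄(b)|² ≤ c R^{3ε}`. -/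
theorem annulus_dirichlet_energy
    (V : ℝ → ℝ) (aV AV : ℝ) (L : ℝ≥0)
    (hC2 : ContDiff ℝ 2 V) (hsym : ∀ x, V (-x) = V x)
    (haV : 0 < aV) (hlb : ∀ x, aV ≤ deriv (deriv V) x)
    (hub : ∀ x, deriv (deriv V) x ≤ AV)
    (hLip : LipschitzWith L (deriv (deriv V))) :
    ∀ (Λ : ℝ) (u : ℝ × ℝ) (ε : ℝ), 0 < Λ → 0 < ε →
    ∃ c : ℝ, 0 < c ∧
      ∀ (D : Finset Z2) (ψ ψt : Z2 → ℝ),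
        DiscConnected (D : Set Z2) →
        2 ≤ diamZ (D : Set Z2) →
        (∀ x ∈ bdry (D : Set Z2),
          |ψ x - (u.1 * (x.1 : ℝ) + u.2 * (x.2 : ℝ))|
            ≤ Λ * Real.log (diamZ (D : Set Z2)) ^ Λ) →
        (∀ x ∈ bdry (D : Set Z2),
          |ψt x - (u.1 * (x.1 : ℝ) + u.2 * (x.2 : ℝ))|
            ≤ Λ * Real.log (diamZ (D : Set Z2)) ^ Λ) →
      ∀ P Pt : Measure (↥D → ℝ), IsGL V D ψ P → IsGL V D ψt Pt →
      ∃ R1 : ℝ,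
        diamZ (D : Set Z2) ^ (1 - ε) ≤ R1 ∧ R1 ≤ 2 * diamZ (D : Set Z2) ^ (1 - ε) ∧
      ∃ μ : Measure ((↥D → ℝ) × (↥D → ℝ)),
        IsCoupling μ P Pt ∧
        (∑ᶠ b ∈ intEdges (annul D R1 (R1 + diamZ (D : Set Z2) ^ (1 - 5 * ε))),
            ∫ ω, (grad (fun z => vee D ω.1 ψ z - vee D ω.2 ψt z) b) ^ 2 ∂μ)
          ≤ c * diamZ (D : Set Z2) ^ (-ε) ∧
        (∑ᶠ b ∈ intEdges (innerSet D R1),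
            ∫ ω, (grad (fun z => vee D ω.1 ψ z - vee D ω.2 ψt z) b) ^ 2 ∂μ)
          ≤ c * diamZ (D : Set Z2) ^ (3 * ε) := by
  intro Λ u ε hΛ hε
  obtain ⟨c, hc, henergy⟩ := annulus_dirichlet_energy_general
    (.of_contDiff hC2 haV fun x => ⟨hlb x, hub x⟩) (mul_pos two_pos hΛ) hΛ hε
  refine ⟨c, hc, fun D ψ ψt _ hD hψ hψt => henergy D ψ ψt (one_lt_two.trans_le hD) fun x hx => ?_⟩
  rw [two_mul, add_mul]
  exact (abs_sub_le _ _ _).trans (add_le_add (hψ x hx) ((abs_sub_comm _ _).trans_le (hψt x hx)))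

end
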